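/- Let $p$ be a prime, $q$ a power of $p$ (with $q>1$), and $M$ a prime with $\gcd(M,q)=1$. On $\mathbb F_{q^2}$ write $\bar a=a^q$, and extend this coefficientwise to polynomials and entrywise to matrices. For a polynomial $f$ of degree $d$ over $\mathbb F_{q^2}$ with $f(0)\neq 0$ put $\tilde f(t)=\overline{f(0)}^{-1}\,t^d\,\bar f(t^{-1})$. A monic irreducible $f$ over $\mathbb F_{q^2}$ with $f(0)\ne 0$ and $\tilde f=f$ is called SCIM. A SCIM polynomial $f$ of degree $d$ is an $\widetilde M$-power polynomial if $f(x^M)$ has a SCIM factor of degree $d$; a monic irreducible $g$ of degree $d$ over $\mathbb F_{q^2}$ is an $M$-power polynomial if $g(x^M)$ has an irreducible factor of degree $d$ over $\mathbb F_{q^2}$. For $d\ge 1$ let - $\widetilde N_M(q,d)$ be the number of $\widetilde M$-power SCIM polynomials of degree $d$; - $\widetilde S'_M(d,q)$ be the number of SCIM polynomials of degree $d$ that are not $\widetilde M$-power polynomials; - $\widetilde R_M(q,d)$ be the number of unordered pairs $\{g,\tilde g\}$ with $g$ monic irreducible of degree $d$ over $\mathbb F_{q^2}$, $g(0)\neq 0$,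 $g\neq\tilde g$, and $g$ an $M$-power polynomial; - $S'_M(d,q)$ be the number of unordered pairs $\{g,\tilde g\}$ with $g$ monic irreducible of degree $d$ over $\mathbb F_{q^2}$, $g(0)\neq 0$, $g\neq\tilde g$, and $g$ not an $M$-power polynomial. Let $U(n,q^2)=\{A\in GL(n,\mathbb F_{q^2}) : A\Lambda_n\bar A^{t}=\Lambda_n\}$, where $\Lambda_n$ is the $n\times n$ matrix with $1$'s on the anti-diagonal and $0$'s elsewhere. For $n\ge1$ let $css_U^M(n,q)$ be the number of conjugacy classes of $U(n,q^2)$ consisting of semisimple matrices (squarefree minimal polynomial over $\mathbb F_{q^2}$) of the form $\alpha^M$ with $\alpha\in U(n,q^2)$. Then the four infinite products below converge in $\mathbb Q[[z]]$ (coefficientwise, each coefficient being eventually constant) and $$1+\sum_{n\ge1}css_U^M(n,q)\,z^n=\prod_{d\text{ odd}}(1-z^d)^{-\widetilde N_M(q,d)}\prod_{d\ge1}(1-z^{2d})^{-\widetilde R_M(q,d)}\prod_{d\text{ odd}}(1-z^{dM})^{-\widetilde S'_M(d,q)}\prod_{d\ge1}(1-z^{2dM})^{-S'_M(d,q)},$$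 where $d$ odd means $d=1,3,5,\dots$ -/

import Mathlib

open Polynomial Matrix

noncomputable section

/-- `f̃(t) = conj(f(0))⁻¹ · t^(deg f) · f̄(1/t)`, where the conjugation `σ` is applied
coefficientwise. Only meaningful when `f(0) ≠ 0`. -/
def tildePoly {F : Type*} [Field F] (σ : F →+* F) (f : F[X]) : F[X] :=
  Polynomial.C (σ (f.coeff 0))⁻¹ * (f.map σ).reverse

/-- A self-conjugate irreducible monic (SCIM) polynomial (with nonzero constant term). -/
def IsSCIM {F : Type*} [Field F] (σ : F →+* F) (f : F[X]) : Prop :=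
  f.Monic ∧ Irreducible f ∧ f.coeff 0 ≠ 0 ∧ tildePoly σ f = f

/-- An `M̃`-power polynomial: a SCIM polynomial `f` such that `f(x^M)` has a SCIM factor of
degree `deg f`. -/
def IsMtildePowerPoly {F : Type*} [Field F] (σ : F →+* F) (M : ℕ) (f : F[X]) : Prop :=
  IsSCIM σ f ∧ ∃ g : F[X], IsSCIM σ g ∧ g.natDegree = f.natDegree ∧ g ∣ f.comp (X ^ M)

/-- `Ñ_M(q,d)`: the number of `M̃`-power SCIM polynomials of degree `d`. -/
def NtildeM {F : Type*} [Field F] (σ : F →+* F) (M d : ℕ) : ℕ :=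
  Nat.card {f : F[X] // IsMtildePowerPoly σ M f ∧ f.natDegree = d}

/-- A monic irreducible polynomial `g` with `g(0) ≠ 0` and `g ≠ g̃`. -/
def IsNonSelfConj {F : Type*} [Field F] (σ : F →+* F) (g : F[X]) : Prop :=
  g.Monic ∧ Irreducible g ∧ g.coeff 0 ≠ 0 ∧ g ≠ tildePoly σ g

/-- An `M`-power polynomial: a monic irreducible `g` such that `g(x^M)` has an irreducible
factor of degree `deg g`. -/
def IsMPowerPoly {F : Type*} [Field F] (M : ℕ) (g : F[X]) : Prop :=
  g.Monic ∧ Irreducible g ∧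
    ∃ h : F[X], Irreducible h ∧ h.natDegree = g.natDegree ∧ h ∣ g.comp (X ^ M)

/-- `R̃_M(q,d)`: the number of unordered pairs `{g, g̃}` with `g` a monic irreducible
degree-`d` `M`-power polynomial, `g(0) ≠ 0` and `g ≠ g̃`. -/
def RtildeM {F : Type*} [Field F] (σ : F →+* F) (M d : ℕ) : ℕ :=
  Nat.card {P : Sym2 F[X] // ∃ g : F[X], IsNonSelfConj σ g ∧ g.natDegree = d ∧
    IsMPowerPoly M g ∧ P = s(g, tildePoly σ g)}

/-- `S̃'_M(d,q)`: the number of SCIM polynomials of degree `d` that are not `M̃`-power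
polynomials. -/
def StildePrimeM {F : Type*} [Field F] (σ : F →+* F) (M d : ℕ) : ℕ :=
  Nat.card {f : F[X] // IsSCIM σ f ∧ f.natDegree = d ∧ ¬ IsMtildePowerPoly σ M f}

/-- `S'_M(d,q)`: the number of unordered pairs `{g, g̃}` with `g` monic irreducible of
degree `d`, `g(0) ≠ 0`, `g ≠ g̃`, and `g` not an `M`-power polynomial. -/
def SPrimeM {F : Type*} [Field F] (σ : F →+* F) (M d : ℕ) : ℕ :=
  Nat.card {P : Sym2 F[X] // ∃ g : F[X], IsNonSelfConj σ g ∧ g.natDegree = d ∧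
    ¬ IsMPowerPoly M g ∧ P = s(g, tildePoly σ g)}

/-- The anti-diagonal matrix `Λ_n` with all anti-diagonal entries `1`. -/
def antidiagMat (F : Type*) [Field F] (n : ℕ) : Matrix (Fin n) (Fin n) F :=
  Matrix.of fun i j => if (i : ℕ) + (j : ℕ) + 1 = n then 1 else 0

/-- Membership in the unitary group `U(n,q²)`:
`A` invertible and `A · Λ_n · Āᵗ = Λ_n`, where `Ā` applies `σ` entrywise. -/
def IsUnitaryMat {F : Type*} [Field F] (σ : F →+* F) {n : ℕ}
    (A : Matrix (Fin n) (Fin n) F) : Prop :=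
  IsUnit A ∧ A * antidiagMat F n * (A.map σ)ᵀ = antidiagMat F n

/-- Conjugacy in the unitary group. -/
def ConjU {F : Type*} [Field F] (σ : F →+* F) {n : ℕ}
    (A B : Matrix (Fin n) (Fin n) F) : Prop :=
  ∃ P : Matrix (Fin n) (Fin n) F, IsUnitaryMat σ P ∧ B = P * A * P⁻¹

/-- `A` is an `M`-th power in the unitary group. -/
def IsMPowerInU {F : Type*} [Field F] (σ : F →+* F) (M : ℕ) {n : ℕ}
    (A : Matrix (Fin n) (Fin n) F) : Prop :=
  ∃ B : Matrix (Fin n) (Fin n) F, IsUnitaryMat σ B ∧ B ^ M = A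

/-- Number of `U(n,q²)`-conjugacy classes of semisimple matrices in `U(n,q²)` that are
`M`-th powers in `U(n,q²)`. -/
def numSSPowerClasses {F : Type*} [Field F] (σ : F →+* F) (M n : ℕ) : ℕ :=
  Nat.card (Quot (fun A B : {A : Matrix (Fin n) (Fin n) F // IsUnitaryMat σ A ∧
    Squarefree (minpoly F A) ∧ IsMPowerInU σ M A} => ConjU σ A.1 B.1))

/-- The topology of the formal power series ring `ℚ[[z]]`: coefficientwise convergence, the
coefficient field `ℚ` being discrete (so each coefficient is eventually constant). -/
instance formalPowerSeriesTopology : TopologicalSpace (PowerSeries ℚ) :=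
  @PowerSeries.WithPiTopology.instTopologicalSpace ℚ ⊥

end

/-! ### Norms in finite rings with involution -/

section NormEquation

theorem FiniteField.exists_quadraticForm_eq {k : Type*} [Field k] [Finite k] (n h : k)
    (hn : 1 - 4 * n ≠ 0) : ∃ a b : k, a ^ 2 + a * b + n * b ^ 2 = h := by
  have := Fintype.ofFinite k
  by_cases h2 : ringChar k = 2
  · obtain ⟨a, ha⟩ := FiniteField.isSquare_of_char_two h2 h
    exact ⟨a, 0, by rw [ha]; ring⟩
  · have hodd := FiniteField.odd_card_of_char_ne_two h2
    have h20 : (2 : k) ≠ 0 := Ring.two_ne_zero h2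
    obtain ⟨u, v, huv⟩ := FiniteField.exists_root_sum_quadratic
      (f := (X ^ 2 - C (4 * h) : k[X])) (g := C (4 * n - 1) * X ^ 2)
      (degree_X_pow_sub_C (by norm_num) _)
      (by rw [degree_C_mul_X_pow 2 (fun h0 => hn (by linear_combination -h0))]; rfl) hodd
    simp only [eval_sub, eval_pow, eval_X, eval_C, eval_mul] at huv
    refine ⟨(u - v) / 2, v, ?_⟩
    field_simp
    linear_combination huv

theorem exists_quadraticForm_sub_isNilpotent {S : Type*} [CommRing S] [Finite S] (n h : S)
    (hn : IsUnit (1 - 4 * n)) : ∃ a b : S, IsNilpotent (a ^ 2 + a * b + n * b ^ 2 - h) := by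
  let R := S ⧸ nilradical S
  have : IsReduced R := by
    apply (Ideal.isRadical_iff_quotient_reduced (nilradical S)).1
    exact Ideal.radical_isRadical _
  have : Finite R := Quotient.finite _
  let π : S →+* R := Ideal.Quotient.mk (nilradical S)
  have key : ∀ I : MaximalSpectrum R, ∃ a b : R ⧸ I.asIdeal,
      a ^ 2 + a * b + Ideal.Quotient.mk I.asIdeal (π n) * b ^ 2 =
        Ideal.Quotient.mk I.asIdeal (π h) := by
    intro I
    have := I.isMaximal
    have hu := (hn.map π).map (Ideal.Quotient.mk I.asIdeal)
    have h4 : Ideal.Quotient.mk I.asIdeal (π 4) = 4 := by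
      rw [map_ofNat π 4]; exact map_ofNat (Ideal.Quotient.mk I.asIdeal) 4
    rw [map_sub, map_mul, map_one, map_sub, map_mul, map_one, h4] at hu
    let : Field (R ⧸ I.asIdeal) := Ideal.Quotient.field I.asIdeal
    have : Finite (R ⧸ I.asIdeal) := Quotient.finite _
    apply FiniteField.exists_quadraticForm_eq
    exact hu.ne_zero
  choose a b hab using key
  obtain ⟨a', ha'⟩ := Ideal.Quotient.mk_surjective ((IsArtinianRing.equivPi R).symm a)
  obtain ⟨b', hb'⟩ := Ideal.Quotient.mk_surjective ((IsArtinianRing.equivPi R).symm b)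
  refine ⟨a', b', ?_⟩
  rw [← mem_nilradical, ← Ideal.Quotient.eq_zero_iff_mem, map_sub, sub_eq_zero]
  apply (IsArtinianRing.equivPi R).injective
  funext I
  have e1 : IsArtinianRing.equivPi R (Ideal.Quotient.mk (nilradical S) a') = a := by
    rw [ha']; simp
  have e2 : IsArtinianRing.equivPi R (Ideal.Quotient.mk (nilradical S) b') = b := by
    rw [hb']; simp
  simp only [map_add, map_pow, map_mul, e1, e2]
  exact hab I

variable {A : Type*} [CommRing A] (τ : A →+* A)

theorem map_units_inv_eq_of_map_eq {u : Aˣ} (hu : τ (u : A) = u) : τ (↑u⁻¹ : A) = ↑u⁻¹ := by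
  have h1 : τ (↑u⁻¹ : A) * u = 1 := by rw [← hu, ← map_mul]; simp
  exact Units.eq_inv_of_mul_eq_one_left ((mul_comm _ _).trans h1)

theorem exists_mul_map_eq_one_add_of_pow_eq_zero (hτ : ∀ x, τ (τ x) = x) {w : A}
    (hw : w + τ w = 1) (k : ℕ) :
    ∀ δ : A, τ δ = δ → δ ^ (2 ^ k) = 0 → ∃ y, y * τ y = 1 + δ := by
  induction k with
  | zero =>
    intro δ _ h
    exact ⟨1, by simpa using h⟩
  | succ k ih =>
    intro δ hδ h
    have hnil : IsNilpotent (δ * (1 + w * τ w * δ)) :=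
      (Commute.all _ _).isNilpotent_mul_right ⟨_, h⟩
    obtain ⟨u, hu⟩ := hnil.isUnit_one_add
    have hu' : (u : A) = (1 + w * δ) * τ (1 + w * δ) := by
      rw [hu, map_add, map_mul, hδ, map_one]
      linear_combination -δ * hw
    have hτu : τ (u : A) = u := by rw [hu', map_mul, hτ, mul_comm]
    have hτi := map_units_inv_eq_of_map_eq τ hτu
    obtain ⟨y, hy⟩ := ih (-(w * τ w) * δ ^ 2 * ↑u⁻¹)
      (by simp only [map_mul, map_neg, map_pow, hτ, hδ, hτi]; ring)
      (by rw [mul_pow, mul_pow, ← pow_mul, ← pow_succ', h]; ring)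
    refine ⟨(1 + w * δ) * y, ?_⟩
    calc (1 + w * δ) * y * τ ((1 + w * δ) * y)
        = ((1 + w * δ) * τ (1 + w * δ)) * (y * τ y) := by rw [map_mul]; ring
      _ = u * (1 + -(w * τ w) * δ ^ 2 * ↑u⁻¹) := by rw [hy, hu']
      _ = u + -(w * τ w) * δ ^ 2 * (u * ↑u⁻¹) := by ring
      _ = 1 + δ := by rw [Units.mul_inv, hu]; ring

theorem exists_mul_map_eq_of_isUnit [Finite A] (hτ : ∀ x, τ (τ x) = x) {w : A}
    (hw : w + τ w = 1) (hw' : IsUnit (w - τ w)) {h : A} (hh : IsUnit h) (hτh : τ h = h) :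
    ∃ y, y * τ y = h := by
  let S := τ.eqLocus (RingHom.id A)
  have hmem : ∀ x, x ∈ S ↔ τ x = x := fun x => Iff.rfl
  let n : S := ⟨w * τ w, by rw [hmem, map_mul, hτ, mul_comm]⟩
  have hn : IsUnit (1 - 4 * n) := by
    obtain ⟨u, hu⟩ := hw'.pow 2
    have hτu : τ (u : A) = u := by rw [hu, map_pow, map_sub, hτ]; ring
    refine IsUnit.of_mul_eq_one ⟨↑u⁻¹, (hmem _).2 (map_units_inv_eq_of_map_eq τ hτu)⟩ ?_
    apply Subtype.ext
    have : (1 - 4 * (w * τ w)) = (u : A) := by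
      rw [hu]; linear_combination (-1 - (w + τ w)) * hw
    change (1 - 4 * (w * τ w)) * (↑u⁻¹ : A) = 1
    rw [this, Units.mul_inv]
  obtain ⟨a, b, hab⟩ := exists_quadraticForm_sub_isNilpotent n (⟨h, hτh⟩ : S) hn
  have hab' := hab.map S.subtype
  have ha : τ (a : A) = a := a.2
  have hb : τ (b : A) = b := b.2
  set y : A := a + b * w with hy
  have hyy : y * τ y = (a : A) ^ 2 + a * b + w * τ w * b ^ 2 := by
    rw [hy, map_add, map_mul, ha, hb]; linear_combination (a : A) * b * hw
  have hnil : IsNilpotent (y * τ y - h) := by rw [hyy]; exact hab'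
  obtain ⟨u, hu⟩ := hh
  have hyu : IsUnit (y * τ y) := by
    have := hnil.isUnit_add_left_of_commute u.isUnit (Commute.all _ _)
    rwa [hu, add_comm, sub_add_cancel] at this
  obtain ⟨v, hv⟩ := hyu
  have hτv : τ (v : A) = v := by rw [hv, map_mul, hτ, mul_comm]
  have hτv' := map_units_inv_eq_of_map_eq τ hτv
  have hnil' : IsNilpotent (-(y * τ y - h) * (↑v⁻¹ : A)) :=
    (Commute.all _ _).isNilpotent_mul_right hnil.neg
  obtain ⟨m, hm⟩ := hnil'
  obtain ⟨z, hz⟩ := exists_mul_map_eq_one_add_of_pow_eq_zero τ hτ hw m _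
    (by rw [map_mul, hτv', map_neg, map_sub, map_mul, hτ, hτh, mul_comm y])
    (pow_eq_zero_of_le Nat.lt_two_pow_self.le hm)
  refine ⟨y * z, ?_⟩
  calc y * z * τ (y * z) = (y * τ y) * (z * τ z) := by rw [map_mul]; ring
    _ = v + (h - y * τ y) * (v * ↑v⁻¹) := by rw [hz, ← hv]; ring
    _ = h := by rw [Units.mul_inv, hv]; ring

/-- In a finite ring with involution containing a suitable central element, every hermitian unit
is a norm `y * star y`, with `y` in the bicommutant of the unit. -/
theorem exists_mul_star_eq_of_isUnit {B : Type*} [Ring B] [StarRing B] [Finite B] {w : B}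
    (hc : ∀ z, z * w = w * z) (hw : w + star w = 1) (hw' : IsUnit (w - star w)) {h : B}
    (hh : IsUnit h) (hs : star h = h) :
    ∃ y, y * star y = h ∧ ∀ z, z * h = h * z → z * y = y * z := by
  let A := Subring.centralizer (Subring.centralizer ({h} : Set B) : Set B)
  have hmem : ∀ x, x ∈ A ↔ ∀ z, h * z = z * h → z * x = x * z := by
    intro x
    simp only [A, Subring.mem_centralizer_iff, SetLike.mem_coe, Set.mem_singleton_iff,
      forall_eq]
  have hcA : ∀ x ∈ A, h * x = x * h := fun x hx => (hmem x).1 hx h rfl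
  let : CommRing A :=
    { (inferInstance : Ring A) with
      mul_comm := fun x y => Subtype.ext ((hmem y).1 y.2 x (hcA x x.2)) }
  have hstar : ∀ x ∈ A, star x ∈ A := by
    intro x hx
    rw [hmem]
    intro z hz
    have h1 : h * star z = star z * h := by
      have := congrArg star hz
      rw [star_mul, star_mul, hs] at this
      exact this.symm
    have := congrArg star ((hmem x).1 hx _ h1)
    simpa using this.symm
  let τ : A →+* A :=
    { toFun := fun x => ⟨star x, hstar x x.2⟩
      map_one' := Subtype.ext (star_one B)
      map_zero' := Subtype.ext (star_zero B)
      map_add' := fun x y => Subtype.ext (star_add _ _)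
      map_mul' := fun x y => by
        rw [mul_comm x y]; exact Subtype.ext (star_mul _ _) }
  have hwA : w ∈ A := (hmem w).2 fun z _ => hc z
  have hhA : h ∈ A := (hmem h).2 fun z hz => hz.symm
  have unitA : ∀ x : A, IsUnit (x : B) → IsUnit x := by
    rintro ⟨x, hx⟩ ⟨u, hu⟩
    have hu : (u : B) = x := hu
    have hi : (↑u⁻¹ : B) ∈ A := by
      rw [hmem] at hx ⊢
      intro z hz
      have := hx z hz
      rw [← hu] at this
      exact ((show Commute z (u : B) from this).units_inv_right).eq
    exact IsUnit.of_mul_eq_one (⟨↑u⁻¹, hi⟩ : A)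
      (Subtype.ext (by change x * (↑u⁻¹ : B) = 1; rw [← hu]; simp))
  obtain ⟨y, hy⟩ := exists_mul_map_eq_of_isUnit τ (fun x => Subtype.ext (star_star _))
    (w := ⟨w, hwA⟩) (Subtype.ext hw) (unitA _ hw') (h := ⟨h, hhA⟩) (unitA _ hh) (Subtype.ext hs)
  exact ⟨y, congrArg Subtype.val hy, fun z hz => (hmem y).1 y.2 z hz.symm⟩

end NormEquation

/-! ### Unitary matrices over a finite field -/

section Unitary

variable {F : Type*} [Field F] (σ : F →+* F) {n : ℕ}

theorem antidiagMat_apply (i j : Fin n) :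
    antidiagMat F n i j = if j = Fin.rev i then 1 else 0 := by
  have : ((i : ℕ) + (j : ℕ) + 1 = n) ↔ j = Fin.rev i := by
    rw [Fin.ext_iff, Fin.val_rev]; omega
  simp only [antidiagMat, Matrix.of_apply, this]

theorem antidiagMat_mul_self : antidiagMat F n * antidiagMat F n = 1 := by
  ext i j
  simp only [Matrix.mul_apply, antidiagMat_apply, Matrix.one_apply, ite_mul, one_mul, zero_mul,
    Finset.sum_ite_eq', Finset.mem_univ, if_true, Fin.rev_rev, eq_comm]

theorem antidiagMat_transpose : (antidiagMat F n)ᵀ = antidiagMat F n := by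
  ext i j
  simp only [Matrix.transpose_apply, antidiagMat_apply]
  congr 1
  rw [eq_iff_iff]
  constructor <;> (rintro rfl; simp)

theorem antidiagMat_map : (antidiagMat F n).map σ = antidiagMat F n := by
  ext i j
  simp only [Matrix.map_apply, antidiagMat_apply]
  split_ifs <;> simp

theorem isUnit_antidiagMat : IsUnit (antidiagMat F n) :=
  IsUnit.of_mul_eq_one _ antidiagMat_mul_self

theorem Matrix.map_map_of_involutive {ι κ : Type*} (hσ : ∀ x, σ (σ x) = x) (A : Matrix ι κ F) :
    (A.map σ).map σ = A := by
  ext i j; simp [hσ]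

/-- The adjoint involution of the hermitian form with Gram matrix `Λ_n`. -/
@[reducible] def unitaryStarRing (hσ : ∀ x, σ (σ x) = x) (n : ℕ) :
    StarRing (Matrix (Fin n) (Fin n) F) where
  star X := antidiagMat F n * (X.map σ)ᵀ * antidiagMat F n
  star_involutive X := by
    change antidiagMat F n * ((antidiagMat F n * (X.map σ)ᵀ * antidiagMat F n).map σ)ᵀ *
      antidiagMat F n = X
    rw [Matrix.map_mul, Matrix.map_mul, antidiagMat_map, ← Matrix.transpose_map,
      Matrix.map_map_of_involutive σ hσ, Matrix.transpose_mul, Matrix.transpose_mul,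
      antidiagMat_transpose, Matrix.transpose_transpose]
    calc _ = (antidiagMat F n * antidiagMat F n) * X * (antidiagMat F n * antidiagMat F n) := by
          simp only [Matrix.mul_assoc]
      _ = X := by rw [antidiagMat_mul_self, Matrix.one_mul, Matrix.mul_one]
  star_mul X Y := by
    change antidiagMat F n * ((X * Y).map σ)ᵀ * antidiagMat F n =
      (antidiagMat F n * (Y.map σ)ᵀ * antidiagMat F n) *
        (antidiagMat F n * (X.map σ)ᵀ * antidiagMat F n)
    calc _ = antidiagMat F n * (Y.map σ)ᵀ * 1 * (X.map σ)ᵀ * antidiagMat F n := by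
          rw [Matrix.map_mul, Matrix.transpose_mul, Matrix.mul_one]
          simp only [Matrix.mul_assoc]
      _ = _ := by rw [← antidiagMat_mul_self]; simp only [Matrix.mul_assoc]
  star_add X Y := by
    change antidiagMat F n * ((X + Y).map σ)ᵀ * antidiagMat F n =
      antidiagMat F n * (X.map σ)ᵀ * antidiagMat F n +
        antidiagMat F n * (Y.map σ)ᵀ * antidiagMat F n
    rw [Matrix.map_add _ (map_add σ), Matrix.transpose_add, Matrix.mul_add, Matrix.add_mul]

theorem exists_add_map_eq_one (hσ : ∀ x, σ (σ x) = x) (hne : ∃ x, σ x ≠ x) :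
    ∃ w, w + σ w = 1 ∧ w - σ w ≠ 0 := by
  have key : ∀ c, σ c ≠ c → c + σ c ≠ 0 → ∃ w, w + σ w = 1 ∧ w - σ w ≠ 0 := by
    intro c hc ht
    have hτ : σ (c + σ c) = c + σ c := by rw [map_add, hσ, add_comm]
    refine ⟨c / (c + σ c), ?_, ?_⟩
    · rw [map_div₀, hτ, ← add_div, div_self ht]
    · rw [map_div₀, hτ, ← sub_div]
      exact div_ne_zero (sub_ne_zero.2 (Ne.symm hc)) ht
  obtain ⟨c, hc⟩ := hne
  by_cases ht : c + σ c = 0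
  · refine key (c + 1) (by simpa using hc) ?_
    rw [map_add, map_one]
    intro h
    have h2 : (2 : F) = 0 := by linear_combination h - ht
    exact hc (by linear_combination ht - c * h2)
  · exact key c hc ht

theorem isUnit_left_of_mul_eq {X Y H : Matrix (Fin n) (Fin n) F} (h : X * Y = H)
    (hH : IsUnit H) : IsUnit X := by
  rw [Matrix.isUnit_iff_isUnit_det] at *
  rw [← h, Matrix.det_mul] at hH
  exact isUnit_of_mul_isUnit_left hH

variable [Finite F]

theorem exists_mul_unitaryStar_eq (hσ : ∀ x, σ (σ x) = x) (hne : ∃ x, σ x ≠ x)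
    {H : Matrix (Fin n) (Fin n) F} (hH : IsUnit H)
    (hs : antidiagMat F n * (H.map σ)ᵀ * antidiagMat F n = H) :
    ∃ Y, Y * (antidiagMat F n * (Y.map σ)ᵀ * antidiagMat F n) = H ∧
      ∀ Z, Z * H = H * Z → Z * Y = Y * Z := by
  let _ := unitaryStarRing σ hσ n
  obtain ⟨w, hw, hw'⟩ := exists_add_map_eq_one σ hσ hne
  have hstar : ∀ X : Matrix (Fin n) (Fin n) F,
      star X = antidiagMat F n * (X.map σ)ᵀ * antidiagMat F n := fun _ => rfl
  have hsc : star (Matrix.scalar (Fin n) w) = Matrix.scalar (Fin n) (σ w) := by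
    have : ((Matrix.scalar (Fin n) w).map σ)ᵀ = Matrix.scalar (Fin n) (σ w) := by
      rw [Matrix.scalar_apply, Matrix.scalar_apply, Matrix.diagonal_map (map_zero σ),
        Matrix.diagonal_transpose]
    rw [hstar, this, ← (Matrix.scalar_commute _ (Commute.all _) _).eq, Matrix.mul_assoc,
      antidiagMat_mul_self, Matrix.mul_one]
  refine exists_mul_star_eq_of_isUnit (w := Matrix.scalar (Fin n) w) ?_ ?_ ?_ hH hs
  · exact fun z => ((Matrix.scalar_commute _ (Commute.all _) _).eq).symm
  · rw [hsc, ← map_add, hw, map_one]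
  · rw [hsc, ← map_sub]
    exact (IsUnit.mk0 _ hw').map _

/-- All nondegenerate hermitian forms of the same dimension are equivalent. -/
theorem exists_eq_mul_antidiagMat_mul (hσ : ∀ x, σ (σ x) = x) (hne : ∃ x, σ x ≠ x)
    {J : Matrix (Fin n) (Fin n) F} (hJ : IsUnit J) (hs : (J.map σ)ᵀ = J) :
    ∃ Y, IsUnit Y ∧ J = Y * antidiagMat F n * (Y.map σ)ᵀ := by
  obtain ⟨Y, hY, -⟩ := exists_mul_unitaryStar_eq σ hσ hne (H := J * antidiagMat F n)
    (hJ.mul isUnit_antidiagMat) (by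
      rw [Matrix.map_mul, antidiagMat_map, Matrix.transpose_mul, antidiagMat_transpose, hs,
        ← Matrix.mul_assoc, antidiagMat_mul_self, Matrix.one_mul])
  refine ⟨Y, isUnit_left_of_mul_eq hY (hJ.mul isUnit_antidiagMat), ?_⟩
  rw [← Matrix.mul_assoc] at hY
  rw [Matrix.mul_assoc, isUnit_antidiagMat.mul_left_inj.1 hY]

/-- Unitary matrices that are conjugate in the general linear group are conjugate in the unitary
group. -/
theorem conjU_of_conj (hσ : ∀ x, σ (σ x) = x) (hne : ∃ x, σ x ≠ x)
    {A B P : Matrix (Fin n) (Fin n) F} (hA : IsUnitaryMat σ A) (hB : IsUnitaryMat σ B)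
    (hP : IsUnit P) (h : B * P = P * A) : ConjU σ A B := by
  let _ := unitaryStarRing σ hσ n
  have hstar : ∀ X : Matrix (Fin n) (Fin n) F,
      star X = antidiagMat F n * (X.map σ)ᵀ * antidiagMat F n := fun _ => rfl
  have hU : ∀ X : Matrix (Fin n) (Fin n) F, IsUnit X →
      (X * antidiagMat F n * (X.map σ)ᵀ = antidiagMat F n ↔ X * star X = 1) := by
    intro X _
    rw [hstar, ← antidiagMat_mul_self (F := F), ← Matrix.mul_assoc, ← Matrix.mul_assoc,
      isUnit_antidiagMat.mul_left_inj]
  have hA' : A * star A = 1 := (hU A hA.1).1 hA.2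
  have hB' : B * star B = 1 := (hU B hB.1).1 hB.2
  have hA'' : star A * A = 1 := mul_eq_one_comm.1 hA'
  have hB'' : star B * B = 1 := mul_eq_one_comm.1 hB'
  have hsP : IsUnit (star P) := hP.star
  have hHs : star (star P * P) = star P * P := by rw [star_mul, star_star]
  have h1 : star P * star B = star A * star P := by
    rw [← star_mul, ← star_mul, h]
  have hcomm : A * (star P * P) = star P * P * A := by
    calc A * (star P * P) = A * (star P * (star B * B) * P) := by rw [hB'', Matrix.mul_one]
      _ = A * ((star P * star B) * (B * P)) := by simp only [Matrix.mul_assoc]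
      _ = (A * star A) * (star P * P * A) := by rw [h1, h]; simp only [Matrix.mul_assoc]
      _ = star P * P * A := by rw [hA', Matrix.one_mul]
  obtain ⟨Y, hY, hYc⟩ := exists_mul_unitaryStar_eq σ hσ hne (hsP.mul hP) hHs
  rw [← hstar] at hY
  have hYu : IsUnit Y := isUnit_left_of_mul_eq hY (hsP.mul hP)
  have hAY : A * Y = Y * A := hYc A hcomm
  have hAsY : A * star Y = star Y * A := by
    have h2 : star A * Y = Y * star A := by
      calc star A * Y = star A * Y * (A * star A) := by rw [hA', Matrix.mul_one]
        _ = star A * (Y * A) * star A := by simp only [Matrix.mul_assoc]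
        _ = (star A * A) * Y * star A := by rw [← hAY]; simp only [Matrix.mul_assoc]
        _ = Y * star A := by rw [hA'', Matrix.one_mul]
    have := congrArg star h2
    simpa using this.symm
  obtain ⟨V, hV, hV'⟩ : ∃ V, star Y * V = 1 ∧ V * star Y = 1 := by
    obtain ⟨v, hv⟩ := hYu.star
    exact ⟨↑v⁻¹, by rw [← hv, Units.mul_inv], by rw [← hv, Units.inv_mul]⟩
  have hAV : A * V = V * A := by
    calc A * V = (V * star Y) * A * V := by rw [hV', Matrix.one_mul]
      _ = V * (star Y * A) * V := by simp only [Matrix.mul_assoc]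
      _ = V * A * (star Y * V) := by rw [← hAsY]; simp only [Matrix.mul_assoc]
      _ = V * A := by rw [hV, Matrix.mul_one]
  have hVY : star V * Y = 1 := by
    have := congrArg star hV
    rwa [star_mul, star_star, star_one] at this
  have hQ : star (P * V) * (P * V) = 1 := by
    calc _ = star V * (star P * P) * V := by
          rw [star_mul]; simp only [Matrix.mul_assoc]
      _ = (star V * Y) * (star Y * V) := by
          rw [← hY]; simp only [Matrix.mul_assoc]
      _ = 1 := by rw [hVY, hV, Matrix.one_mul]
  have hQu : IsUnit (P * V) := hP.mul (IsUnit.of_mul_eq_one _ hV')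
  refine ⟨P * V, ⟨hQu, (hU _ hQu).2 (mul_eq_one_comm.1 hQ)⟩, ?_⟩
  have h3 : B * (P * V) = P * V * A := by
    rw [← Matrix.mul_assoc, h, Matrix.mul_assoc, hAV, Matrix.mul_assoc]
  rw [← h3, Matrix.mul_assoc, Matrix.mul_nonsing_inv _
    ((Matrix.isUnit_iff_isUnit_det _).1 hQu), Matrix.mul_one]

end Unitary

/-! ### Semisimple endomorphisms and their characteristic polynomials -/

section Semisimple

universe u v

variable {F : Type u} [Field F]

theorem LinearMap.dvd_minpoly_of_irreducible_of_dvd_charpoly {V : Type*} [AddCommGroup V]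
    [Module F V] [FiniteDimensional F V] (a : Module.End F V) {g : F[X]} (hg : Irreducible g)
    (hd : g ∣ a.charpoly) : g ∣ minpoly F a := by
  have : Fact (Irreducible g) := ⟨hg⟩
  let b := Module.finBasis F V
  let A := LinearMap.toMatrix b b a
  have hA : A.charpoly = a.charpoly := LinearMap.charpoly_toMatrix a b
  have hmA : minpoly F A = minpoly F a := LinearMap.minpoly_toMatrix b a
  let ι := algebraMap F (AdjoinRoot g)
  let B := A.map ι
  have hroot : B.charpoly.IsRoot (AdjoinRoot.root g) := by
    rw [Matrix.charpoly_map, IsRoot, eval_map_algebraMap, hA, AdjoinRoot.aeval_eq,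
      AdjoinRoot.mk_eq_zero]
    exact hd
  rw [← Matrix.charpoly_toLin', ← Module.End.hasEigenvalue_iff_isRoot_charpoly,
    Module.End.hasEigenvalue_iff_isRoot, Matrix.minpoly_toLin'] at hroot
  have hdvd : minpoly (AdjoinRoot g) B ∣ (minpoly F A).map ι := by
    apply minpoly.dvd
    rw [aeval_map_algebraMap]
    have h1 := aeval_algHom_apply ((Algebra.ofId F (AdjoinRoot g)).mapMatrix) A (minpoly F A)
    rw [minpoly.aeval, map_zero] at h1
    exact h1
  have := hroot.dvd hdvd
  rw [IsRoot, eval_map_algebraMap, AdjoinRoot.aeval_eq, AdjoinRoot.mk_eq_zero, hmA] at this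
  exact this

theorem LinearMap.exists_aeval_apply_eq_zero_of_dvd_charpoly {V : Type*} [AddCommGroup V]
    [Module F V] [FiniteDimensional F V] (a : Module.End F V) {g : F[X]} (hg : Irreducible g)
    (hd : g ∣ a.charpoly) : ∃ v : V, v ≠ 0 ∧ aeval a g v = 0 := by
  obtain ⟨h, hh⟩ := a.dvd_minpoly_of_irreducible_of_dvd_charpoly hg hd
  have hne : minpoly F a ≠ 0 := minpoly.ne_zero (Algebra.IsIntegral.isIntegral a)
  have hh0 : h ≠ 0 := by rintro rfl; simp [hh] at hne
  have hah : aeval a h ≠ 0 := by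
    intro h0
    have h1 := natDegree_le_of_dvd (minpoly.dvd F a h0) hh0
    rw [hh, natDegree_mul hg.ne_zero hh0] at h1
    have := hg.natDegree_pos
    omega
  obtain ⟨u, hu⟩ : ∃ u, aeval a h u ≠ 0 := by
    by_contra! hc
    exact hah (LinearMap.ext hc)
  refine ⟨aeval a h u, hu, ?_⟩
  rw [← Module.End.mul_apply, ← map_mul, ← hh, minpoly.aeval, LinearMap.zero_apply]

/-- A semisimple endomorphism splits off multiplication by the root on `AdjoinRoot g`, for any
irreducible factor `g` of its characteristic polynomial. -/
theorem Module.End.IsSemisimple.exists_equiv_adjoinRoot_prod {V : Type v} [AddCommGroup V]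
    [Module F V] [FiniteDimensional F V] {a : Module.End F V} (ha : a.IsSemisimple) {g : F[X]}
    (hg : Irreducible g) (hm : g.Monic) (hd : g ∣ a.charpoly) :
    ∃ (T : Submodule F V) (hT : T ∈ a.invtSubmodule) (e : (AdjoinRoot g × T) ≃ₗ[F] V),
      ∀ x, a (e x) = e (AdjoinRoot.root g * x.1, LinearMap.restrict a hT x.2) := by
  have : Fact (Irreducible g) := ⟨hg⟩
  obtain ⟨v, hv, hgv⟩ := LinearMap.exists_aeval_apply_eq_zero_of_dvd_charpoly a hg hd
  let φ : AdjoinRoot g →ₗ[F] V :=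
    (LinearMap.applyₗ v) ∘ₗ (aeval a).toLinearMap ∘ₗ (AdjoinRoot.modByMonicHom hm)
  have hφ : ∀ h : F[X], φ (AdjoinRoot.mk g h) = aeval a h v := by
    intro h
    have e1 : φ (AdjoinRoot.mk g h) = aeval a (h %ₘ g) v := by
      simp [φ, AdjoinRoot.modByMonicHom_mk]
    rw [e1]
    conv_rhs => rw [← modByMonic_add_div h g]
    rw [mul_comm g, map_add, map_mul, LinearMap.add_apply, Module.End.mul_apply, hgv, map_zero,
      add_zero]
  have hφmul : ∀ (h : F[X]) (x : AdjoinRoot g), φ (AdjoinRoot.mk g h * x) = aeval a h (φ x) := by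
    intro h x
    obtain ⟨k, rfl⟩ := AdjoinRoot.mk_surjective x
    rw [← map_mul, hφ, hφ, map_mul, Module.End.mul_apply]
  have hφroot : ∀ x, φ (AdjoinRoot.root g * x) = a (φ x) := by
    intro x
    have := hφmul X x
    rwa [AdjoinRoot.mk_X, aeval_X] at this
  have hinj : Function.Injective φ := by
    rw [← LinearMap.ker_eq_bot, LinearMap.ker_eq_bot']
    intro x hx
    by_contra hx0
    obtain ⟨k, hk⟩ := AdjoinRoot.mk_surjective x⁻¹
    have h1 := hφmul k x
    rw [hx, map_zero, hk, inv_mul_cancel₀ hx0, ← map_one (AdjoinRoot.mk g), hφ, map_one] at h1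
    exact hv h1
  have hS : LinearMap.range φ ∈ a.invtSubmodule := by
    rw [Module.End.mem_invtSubmodule]
    rintro _ ⟨x, rfl⟩
    exact ⟨AdjoinRoot.root g * x, hφroot x⟩
  obtain ⟨T, hT, hc⟩ := Module.End.isSemisimple_iff.1 ha _ hS
  refine ⟨T, hT, ((LinearEquiv.ofInjective φ hinj).prodCongr (LinearEquiv.refl F T)).trans
    (Submodule.prodEquivOfIsCompl _ _ hc), ?_⟩
  rintro ⟨x, t⟩
  simp only [LinearEquiv.trans_apply, LinearEquiv.prodCongr_apply, LinearEquiv.refl_apply,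
    Submodule.coe_prodEquivOfIsCompl', map_add, LinearEquiv.ofInjective_apply, hφroot]
  rfl

theorem LinearMap.charpoly_eq_of_intertwine {V W : Type*} [AddCommGroup V] [Module F V]
    [FiniteDimensional F V] [AddCommGroup W] [Module F W] [FiniteDimensional F W]
    {a : Module.End F V} {b : Module.End F W} (e : W ≃ₗ[F] V) (h : ∀ x, a (e x) = e (b x)) :
    a.charpoly = b.charpoly := by
  rw [← LinearEquiv.charpoly_conj e b]
  congr 1
  ext x
  rw [LinearEquiv.conj_apply_apply, ← h, LinearEquiv.apply_symm_apply]

theorem LinearMap.charpoly_eq_pow_of_aeval_eq_zero {V : Type*} [AddCommGroup V] [Module F V]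
    [FiniteDimensional F V] {a : Module.End F V} {f : F[X]} (hf : Irreducible f) (hm : f.Monic)
    (h : aeval a f = 0) : a.charpoly = f ^ (Module.finrank F V / f.natDegree) := by
  classical
  have hne : a.charpoly ≠ 0 := a.charpoly_monic.ne_zero
  have h1 : ∀ g ∈ UniqueFactorizationMonoid.normalizedFactors a.charpoly, g = f := by
    intro g hg
    have hgi := UniqueFactorizationMonoid.irreducible_of_normalized_factor g hg
    have hgf : g ∣ f := (LinearMap.dvd_minpoly_of_irreducible_of_dvd_charpoly a hgi
      (UniqueFactorizationMonoid.dvd_of_mem_normalizedFactors hg)).trans (minpoly.dvd F a h)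
    rw [← UniqueFactorizationMonoid.normalize_normalized_factor g hg, ← hm.normalize_eq_self]
    exact normalize_eq_normalize_iff_associated.2 (hgi.associated_of_dvd hf hgf)
  have h2 := UniqueFactorizationMonoid.prod_normalizedFactors_eq hne
  rw [a.charpoly_monic.normalize_eq_self, Multiset.eq_replicate_of_mem h1,
    Multiset.prod_replicate] at h2
  have h3 := congrArg natDegree h2
  rw [natDegree_pow, LinearMap.charpoly_natDegree] at h3
  rw [← h3, Nat.mul_div_cancel _ hf.natDegree_pos, h2]

theorem AdjoinRoot.finrank_eq_natDegree (g : F[X]) :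
    Module.finrank F (AdjoinRoot g) = g.natDegree :=
  finrank_quotient_span_eq_natDegree

theorem AdjoinRoot.charpoly_mulLeft_root {g : F[X]} (hg : Irreducible g) (hm : g.Monic)
    [FiniteDimensional F (AdjoinRoot g)] :
    (LinearMap.mulLeft F (AdjoinRoot.root g)).charpoly = g := by
  have h0 : aeval (LinearMap.mulLeft F (AdjoinRoot.root g)) g = 0 := by
    have : LinearMap.mulLeft F (AdjoinRoot.root g) =
      Algebra.lmul F (AdjoinRoot g) (AdjoinRoot.root g) := rfl
    rw [this, aeval_algHom_apply, AdjoinRoot.aeval_eq, AdjoinRoot.mk_self, map_zero]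
  rw [LinearMap.charpoly_eq_pow_of_aeval_eq_zero hg hm h0, AdjoinRoot.finrank_eq_natDegree,
    Nat.div_self hg.natDegree_pos, pow_one]

theorem charpoly_split {V : Type*} [AddCommGroup V] [Module F V] [FiniteDimensional F V]
    {a : Module.End F V} {g : F[X]} [FiniteDimensional F (AdjoinRoot g)]
    {T : Submodule F V} {hT : T ∈ a.invtSubmodule} (e : (AdjoinRoot g × T) ≃ₗ[F] V)
    (he : ∀ x, a (e x) = e (AdjoinRoot.root g * x.1, LinearMap.restrict a hT x.2)) (k : ℕ) :
    (a ^ k).charpoly = (LinearMap.mulLeft F (AdjoinRoot.root g ^ k)).charpoly *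
      (LinearMap.restrict a hT ^ k).charpoly := by
  rw [← LinearMap.charpoly_prodMap]
  apply LinearMap.charpoly_eq_of_intertwine e
  induction k with
  | zero => intro x; simp
  | succ k ih =>
    intro x
    rw [pow_succ', Module.End.mul_apply, ih, he]
    simp [pow_succ']

/-- Two semisimple endomorphisms with the same characteristic polynomial are conjugate. -/
theorem Module.End.IsSemisimple.exists_intertwine_of_charpoly_eq (n : ℕ) :
    ∀ {V W : Type v} [AddCommGroup V] [Module F V] [FiniteDimensional F V] [AddCommGroup W]
      [Module F W] [FiniteDimensional F W] {a : Module.End F V} {b : Module.End F W},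
      Module.finrank F V = n → a.IsSemisimple → b.IsSemisimple → a.charpoly = b.charpoly →
      ∃ e : V ≃ₗ[F] W, ∀ x, e (a x) = b (e x) := by
  induction n using Nat.strong_induction_on with
  | _ n ih =>
    intro V W _ _ _ _ _ _ a b hn ha hb hab
    have hVW : Module.finrank F V = Module.finrank F W := by
      rw [← a.charpoly_natDegree, ← b.charpoly_natDegree, hab]
    rcases Nat.eq_zero_or_pos n with rfl | hpos
    · have := Module.finrank_zero_iff.1 hn
      have := Module.finrank_zero_iff.1 (hVW.symm.trans hn)
      exact ⟨LinearEquiv.ofFinrankEq V W hVW, fun x => Subsingleton.elim _ _⟩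
    · obtain ⟨g, hgm, hgi, hgd⟩ := Polynomial.exists_monic_irreducible_factor a.charpoly (by
        intro hu
        have := natDegree_eq_zero_of_isUnit hu
        rw [LinearMap.charpoly_natDegree] at this
        omega)
      have := hgm.finite_adjoinRoot
      obtain ⟨T, hT, e, he⟩ := ha.exists_equiv_adjoinRoot_prod hgi hgm hgd
      obtain ⟨T', hT', e', he'⟩ := hb.exists_equiv_adjoinRoot_prod hgi hgm (hab ▸ hgd)
      have hc := charpoly_split e he 1
      have hc' := charpoly_split e' he' 1
      rw [pow_one, pow_one, pow_one, AdjoinRoot.charpoly_mulLeft_root hgi hgm] at hc hc'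
      have hTT : (LinearMap.restrict a hT).charpoly = (LinearMap.restrict b hT').charpoly :=
        mul_left_cancel₀ hgi.ne_zero (hc.symm.trans (hab.trans hc'))
      have hfr : Module.finrank F T < n := by
        have h1 := e.finrank_eq
        rw [Module.finrank_prod, AdjoinRoot.finrank_eq_natDegree, hn] at h1
        have := hgi.natDegree_pos
        omega
      obtain ⟨e₂, he₂⟩ := ih _ hfr rfl (ha.restrict hT) (hb.restrict hT') hTT
      refine ⟨e.symm.trans (((LinearEquiv.refl F _).prodCongr e₂).trans e'), ?_⟩
      intro x
      obtain ⟨y, rfl⟩ := e.surjective x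
      simp [he, he', he₂]

/-- The characteristic polynomial of the `M`-th power of multiplication by the root of `g`. -/
noncomputable def powPoly (M : ℕ) (g : F[X]) : F[X] :=
  minpoly F (AdjoinRoot.root g ^ M) ^
    (g.natDegree / (minpoly F (AdjoinRoot.root g ^ M)).natDegree)

theorem charpoly_mulLeft_root_pow {g : F[X]} (hg : Irreducible g)
    [FiniteDimensional F (AdjoinRoot g)] (M : ℕ) :
    (LinearMap.mulLeft F (AdjoinRoot.root g ^ M)).charpoly = powPoly M g := by
  have : Fact (Irreducible g) := ⟨hg⟩
  have hint : IsIntegral F (AdjoinRoot.root g ^ M) := Algebra.IsIntegral.isIntegral _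
  have h0 : aeval (LinearMap.mulLeft F (AdjoinRoot.root g ^ M))
      (minpoly F (AdjoinRoot.root g ^ M)) = 0 := by
    have : LinearMap.mulLeft F (AdjoinRoot.root g ^ M) =
      Algebra.lmul F (AdjoinRoot g) (AdjoinRoot.root g ^ M) := rfl
    rw [this, aeval_algHom_apply, minpoly.aeval, map_zero]
  rw [LinearMap.charpoly_eq_pow_of_aeval_eq_zero (minpoly.irreducible hint) (minpoly.monic hint)
    h0, AdjoinRoot.finrank_eq_natDegree, powPoly]

theorem Module.End.IsSemisimple.exists_charpoly_pow_eq (M n : ℕ) :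
    ∀ {V : Type v} [AddCommGroup V] [Module F V] [FiniteDimensional F V] {a : Module.End F V},
      Module.finrank F V = n → a.IsSemisimple →
      ∃ G : Multiset F[X], (∀ g ∈ G, g.Monic ∧ Irreducible g) ∧ a.charpoly = G.prod ∧
        (a ^ M).charpoly = (G.map (powPoly M)).prod := by
  induction n using Nat.strong_induction_on with
  | _ n ih =>
    intro V _ _ _ a hn ha
    rcases Nat.eq_zero_or_pos n with rfl | hpos
    · have hone : ∀ b : Module.End F V, b.charpoly = 1 := fun b => by
        apply b.charpoly_monic.natDegree_eq_zero.1
        rw [LinearMap.charpoly_natDegree, hn]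
      exact ⟨0, by simp, by simp [hone], by simp [hone]⟩
    · obtain ⟨g, hgm, hgi, hgd⟩ := Polynomial.exists_monic_irreducible_factor a.charpoly (by
        intro hu
        have := natDegree_eq_zero_of_isUnit hu
        rw [LinearMap.charpoly_natDegree] at this
        omega)
      have := hgm.finite_adjoinRoot
      obtain ⟨T, hT, e, he⟩ := ha.exists_equiv_adjoinRoot_prod hgi hgm hgd
      have hc := charpoly_split e he 1
      rw [pow_one, pow_one, pow_one, AdjoinRoot.charpoly_mulLeft_root hgi hgm] at hc
      have hfr : Module.finrank F T < n := by
        have h1 := e.finrank_eq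
        rw [Module.finrank_prod, AdjoinRoot.finrank_eq_natDegree, hn] at h1
        have := hgi.natDegree_pos
        omega
      obtain ⟨G, hG, hG1, hG2⟩ := ih _ hfr rfl (ha.restrict hT)
      refine ⟨g ::ₘ G, ?_, ?_, ?_⟩
      · intro h hh
        rcases Multiset.mem_cons.1 hh with rfl | hh
        · exact ⟨hgm, hgi⟩
        · exact hG h hh
      · rw [hc, hG1, Multiset.prod_cons]
      · rw [charpoly_split e he M, hG2, charpoly_mulLeft_root_pow hgi, Multiset.map_cons,
          Multiset.prod_cons]

end Semisimple

/-! ### The conjugate-reciprocal of a polynomial -/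

section Tilde

variable {F : Type*} [Field F] (σ : F →+* F)

theorem natDegree_tildePoly {f : F[X]} (h0 : f.coeff 0 ≠ 0) :
    (tildePoly σ f).natDegree = f.natDegree := by
  have h1 : (f.map σ).natTrailingDegree = 0 :=
    natTrailingDegree_eq_zero.2 (Or.inr (by simpa using h0))
  rw [tildePoly, natDegree_C_mul (inv_ne_zero (by simpa using h0)), reverse_natDegree, h1,
    natDegree_map, Nat.sub_zero]

theorem monic_tildePoly {f : F[X]} (h0 : f.coeff 0 ≠ 0) : (tildePoly σ f).Monic := by
  have h1 : (f.map σ).natTrailingDegree = 0 :=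
    natTrailingDegree_eq_zero.2 (Or.inr (by simpa using h0))
  rw [Monic, tildePoly, leadingCoeff_mul, leadingCoeff_C, reverse_leadingCoeff, trailingCoeff, h1,
    coeff_map]
  exact inv_mul_cancel₀ (by simpa using h0)

theorem coeff_zero_tildePoly {f : F[X]} (hm : f.Monic) :
    (tildePoly σ f).coeff 0 = (σ (f.coeff 0))⁻¹ := by
  rw [tildePoly, coeff_C_mul, coeff_zero_reverse, leadingCoeff_map, hm.leadingCoeff, map_one,
    mul_one]

theorem coeff_zero_tildePoly_ne_zero {f : F[X]} (hm : f.Monic) (h0 : f.coeff 0 ≠ 0) :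
    (tildePoly σ f).coeff 0 ≠ 0 := by
  rw [coeff_zero_tildePoly σ hm]
  exact inv_ne_zero (by simpa using h0)

theorem tildePoly_mul (f g : F[X]) :
    tildePoly σ (f * g) = tildePoly σ f * tildePoly σ g := by
  rw [tildePoly, tildePoly, tildePoly, mul_coeff_zero, map_mul, mul_inv, C_mul, Polynomial.map_mul,
    reverse_mul_of_domain]
  ring

theorem tildePoly_one : tildePoly σ (1 : F[X]) = 1 := by
  rw [tildePoly, Polynomial.map_one, coeff_one_zero, map_one, inv_one, C_1, one_mul, ← C_1,
    reverse_C]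

theorem tildePoly_pow (f : F[X]) (k : ℕ) : tildePoly σ (f ^ k) = tildePoly σ f ^ k := by
  induction k with
  | zero => rw [pow_zero, pow_zero, tildePoly_one]
  | succ k ih => rw [pow_succ, pow_succ, tildePoly_mul, ih]

theorem tildePoly_tildePoly (hσ : ∀ x, σ (σ x) = x) {f : F[X]} (hm : f.Monic)
    (h0 : f.coeff 0 ≠ 0) : tildePoly σ (tildePoly σ f) = f := by
  have hd := natDegree_tildePoly σ h0
  have h0' : σ (f.coeff 0) ≠ 0 := by simpa using h0
  rw [tildePoly, coeff_zero_tildePoly σ hm, reverse, natDegree_map, hd, reflect_map, tildePoly,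
    reflect_C_mul, reverse, natDegree_map, reflect_reflect, Polynomial.map_mul, map_C,
    Polynomial.map_map, ← mul_assoc, ← C_mul, map_inv₀, inv_inv,
    mul_inv_cancel₀ (by simpa using h0), C_1, one_mul]
  have : σ.comp σ = RingHom.id F := RingHom.ext hσ
  rw [this, Polynomial.map_id]

theorem reflect_expand {M : ℕ} (hM : 0 < M) (f : F[X]) (N : ℕ) :
    reflect (N * M) (expand F M f) = expand F M (reflect N f) := by
  ext i
  rw [coeff_reflect, coeff_expand hM, coeff_expand hM, coeff_reflect]
  by_cases hi : i ≤ N * M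
  · rw [revAt_le hi]
    have : M ∣ N * M - i ↔ M ∣ i := by
      rw [Nat.dvd_sub_iff_right hi (Dvd.intro_left N rfl)]
    simp only [this]
    split_ifs with hd
    · obtain ⟨k, rfl⟩ := hd
      have hk : k ≤ N := by
        rw [mul_comm] at hi
        exact Nat.le_of_mul_le_mul_right hi hM
      rw [Nat.mul_div_cancel_left _ hM, revAt_le hk, mul_comm N, ← Nat.mul_sub,
        Nat.mul_div_cancel_left _ hM]
    · rfl
  · push Not at hi
    rw [revAt_eq_self_of_lt hi]
    split_ifs with hd
    · rw [revAt_eq_self_of_lt]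
      obtain ⟨k, rfl⟩ := hd
      rw [Nat.mul_div_cancel_left _ hM]
      rw [mul_comm] at hi
      exact Nat.lt_of_mul_lt_mul_left hi
    · rfl

theorem tildePoly_comp_X_pow {M : ℕ} (hM : 0 < M) (f : F[X]) :
    tildePoly σ (f.comp (X ^ M)) = (tildePoly σ f).comp (X ^ M) := by
  rw [← expand_eq_comp_X_pow, ← expand_eq_comp_X_pow, tildePoly, tildePoly, map_mul, expand_C,
    map_expand, reverse, natDegree_expand, reflect_expand hM, coeff_expand hM]
  simp [reverse]

theorem irreducible_tildePoly (hσ : ∀ x, σ (σ x) = x) {f : F[X]} (hm : f.Monic)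
    (h0 : f.coeff 0 ≠ 0) (hf : Irreducible f) : Irreducible (tildePoly σ f) := by
  rw [(monic_tildePoly σ h0).irreducible_iff_natDegree]
  refine ⟨fun h1 => ?_, ?_⟩
  · have := natDegree_tildePoly σ h0
    rw [h1, natDegree_one] at this
    exact hf.natDegree_pos.ne this
  · intro a b ha hb hab
    have hc := coeff_zero_tildePoly_ne_zero σ hm h0
    rw [← hab, mul_coeff_zero] at hc
    have ha0 := left_ne_zero_of_mul hc
    have hb0 := right_ne_zero_of_mul hc
    have h2 : tildePoly σ a * tildePoly σ b = f := by
      rw [← tildePoly_mul, hab, tildePoly_tildePoly σ hσ hm h0]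
    rw [← natDegree_tildePoly σ ha0, ← natDegree_tildePoly σ hb0]
    exact (hm.irreducible_iff_natDegree.1 hf).2 _ _ (monic_tildePoly σ ha0)
      (monic_tildePoly σ hb0) h2

theorem tildePoly_dvd {f g : F[X]} (h : f ∣ g) : tildePoly σ f ∣ tildePoly σ g := by
  obtain ⟨k, rfl⟩ := h
  rw [tildePoly_mul]
  exact dvd_mul_right _ _

/-- If `x` is a root of `f` and `τ` extends the conjugation, then `(τ x)⁻¹` is a root of `f̃`. -/
theorem aeval_inv_tildePoly {E : Type*} [Field E] [Algebra F E] (τ : E →+* E)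
    (hτ : ∀ a, τ (algebraMap F E a) = algebraMap F E (σ a)) {f : F[X]} {x : E} (hx : x ≠ 0)
    (h : aeval x f = 0) : aeval (τ x)⁻¹ (tildePoly σ f) = 0 := by
  have hx' : τ x ≠ 0 := by simpa using hx
  let _ : Invertible (τ x) := invertibleOfNonzero hx'
  have h1 : eval₂ (algebraMap F E) (τ x) (f.map σ) = 0 := by
    have hc : (algebraMap F E).comp σ = τ.comp (algebraMap F E) :=
      RingHom.ext fun a => (hτ a).symm
    rw [eval₂_map, hc, ← hom_eval₂, ← aeval_def, h, map_zero]
  rw [tildePoly, map_mul, aeval_def (τ x)⁻¹ (reverse _), ← invOf_eq_inv,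
    (eval₂_reverse_eq_zero_iff _ _ _).2 h1, mul_zero]

theorem charpoly_inv_eq {ι : Type*} [Fintype ι] [DecidableEq ι] {A : Matrix ι ι F}
    (hA : IsUnit A) : A⁻¹.charpoly = C (A.charpoly.coeff 0)⁻¹ * A.charpoly.reverse := by
  rw [Matrix.charpoly_inv A hA, Matrix.reverse_charpoly, Matrix.det_eq_sign_charpoly_coeff,
    Ring.inverse_eq_inv', mul_inv, C_mul, ← mul_assoc]
  congr 1
  have : ((-1 : F[X]) ^ Fintype.card ι) = C ((-1 : F) ^ Fintype.card ι) := by simp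
  rw [this, ← C_mul, mul_inv_cancel₀ (pow_ne_zero _ (by simp)), C_1, one_mul]

theorem charpoly_coeff_zero_ne_zero {ι : Type*} [Fintype ι] [DecidableEq ι] {A : Matrix ι ι F}
    (hA : IsUnit A) : A.charpoly.coeff 0 ≠ 0 := by
  have h := ((Matrix.isUnit_iff_isUnit_det A).1 hA).ne_zero
  rw [Matrix.det_eq_sign_charpoly_coeff] at h
  exact right_ne_zero_of_mul h

theorem isUnit_map_transpose {ι : Type*} [Fintype ι] [DecidableEq ι] {A : Matrix ι ι F}
    (hA : IsUnit A) : IsUnit (A.map σ)ᵀ := by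
  rw [Matrix.isUnit_transpose]
  exact hA.map σ.mapMatrix

theorem charpoly_conj_transpose_inv {ι : Type*} [Fintype ι] [DecidableEq ι] {A : Matrix ι ι F}
    (hA : IsUnit A) : ((A.map σ)ᵀ)⁻¹.charpoly = tildePoly σ A.charpoly := by
  rw [charpoly_inv_eq (isUnit_map_transpose σ hA), Matrix.charpoly_transpose, Matrix.charpoly_map,
    tildePoly, coeff_map]

theorem tildePoly_charpoly_of_form {ι : Type*} [Fintype ι] [DecidableEq ι] {A J : Matrix ι ι F}
    (hA : IsUnit A) (hJ : IsUnit J) (h : A * J * (A.map σ)ᵀ = J) :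
    tildePoly σ A.charpoly = A.charpoly := by
  have hu := isUnit_map_transpose σ hA
  rw [← charpoly_conj_transpose_inv σ hA]
  have h1 : A * J = J * ((A.map σ)ᵀ)⁻¹ := by
    calc A * J = A * J * (A.map σ)ᵀ * ((A.map σ)ᵀ)⁻¹ := by
          rw [Matrix.mul_assoc (A * J), Matrix.mul_nonsing_inv _
            ((Matrix.isUnit_iff_isUnit_det _).1 hu), Matrix.mul_one]
      _ = _ := by rw [h]
  obtain ⟨u, rfl⟩ := hJ
  have h2 : A = u.val * ((A.map σ)ᵀ)⁻¹ * u⁻¹.val := by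
    rw [← h1, Matrix.mul_assoc, Units.mul_inv, Matrix.mul_one]
  conv_rhs => rw [h2]
  rw [Matrix.coe_units_inv, Matrix.charpoly_units_conj]

end Tilde

/-! ### Self-conjugate irreducible polynomials and the substitution `x ↦ x ^ M` -/

section SCIM

theorem charP_of_card_eq_sq {F : Type*} [Field F] [Fintype F] {p ℓ : ℕ} (hp : p.Prime)
    (hF : Fintype.card F = (p ^ ℓ) ^ 2) : CharP F p := by
  have h1 : CharP F (ringChar F) := inferInstance
  obtain ⟨n, hpr, hn⟩ := FiniteField.card F (ringChar F)
  have h2 : ringChar F ∣ p := by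
    apply hpr.dvd_of_dvd_pow (n := ℓ * 2)
    rw [pow_mul, ← hF, hn]
    exact dvd_pow_self _ n.ne_zero
  rwa [(Nat.prime_dvd_prime_iff_eq hpr hp).1 h2] at h1

variable {F : Type*} [Field F] (σ : F →+* F)

theorem coeff_zero_ne_zero_of_dvd {f g : F[X]} (h : f ∣ g) (hg : g.coeff 0 ≠ 0) :
    f.coeff 0 ≠ 0 := by
  obtain ⟨k, rfl⟩ := h
  rw [mul_coeff_zero] at hg
  exact left_ne_zero_of_mul hg

theorem coeff_zero_comp_X_pow {M : ℕ} (hM : 0 < M) (f : F[X]) :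
    (f.comp (X ^ M)).coeff 0 = f.coeff 0 := by
  rw [← expand_eq_comp_X_pow, coeff_expand hM]
  simp

theorem monic_comp_X_pow {M : ℕ} (hM : 0 < M) {f : F[X]} (hf : f.Monic) :
    (f.comp (X ^ M)).Monic := by
  rw [← expand_eq_comp_X_pow]
  exact hf.expand hM

theorem natDegree_comp_X_pow (M : ℕ) (f : F[X]) :
    (f.comp (X ^ M)).natDegree = f.natDegree * M := by
  rw [← expand_eq_comp_X_pow, natDegree_expand]

theorem dvd_comp_X_pow_iff {f g : F[X]} {M : ℕ} :
    g ∣ f.comp (X ^ M) ↔ aeval (AdjoinRoot.root g ^ M) f = 0 := by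
  rw [← AdjoinRoot.mk_eq_zero, ← AdjoinRoot.aeval_eq, aeval_comp, map_pow, aeval_X]

theorem minpoly_root_pow_eq {f g : F[X]} (hg : Irreducible g) (hf : Irreducible f)
    (hm : f.Monic) {M : ℕ} (h : g ∣ f.comp (X ^ M)) :
    minpoly F (AdjoinRoot.root g ^ M) = f := by
  have : Fact (Irreducible g) := ⟨hg⟩
  exact (minpoly.eq_of_irreducible_of_monic hf (dvd_comp_X_pow_iff.1 h) hm).symm

theorem natDegree_minpoly_pow_dvd {E : Type*} [Field E] [Algebra F E] [FiniteDimensional F E]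
    (y : E) (M : ℕ) : (minpoly F (y ^ M)).natDegree ∣ (minpoly F y).natDegree := by
  have hy : IsIntegral F y := Algebra.IsIntegral.isIntegral y
  have := minpoly.degree_dvd (K := F) (L := IntermediateField.adjoin F {y})
    (x := IntermediateField.AdjoinSimple.gen F y ^ M) (Algebra.IsIntegral.isIntegral _)
  rw [IntermediateField.adjoin.finrank hy, ← minpoly.algebraMap_eq
    (algebraMap (IntermediateField.adjoin F {y}) E).injective, map_pow,
    IntermediateField.AdjoinSimple.algebraMap_gen] at this
  exact this

theorem AdjoinRoot.minpoly_root_of_monic {f : F[X]} (hf : f ≠ 0) (hm : f.Monic) :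
    minpoly F (AdjoinRoot.root f) = f := by
  rw [AdjoinRoot.minpoly_root hf, hm.leadingCoeff, inv_one, C_1, mul_one]

theorem natDegree_dvd_of_dvd_comp_X_pow {f g : F[X]} (hg : Irreducible g) (hgm : g.Monic)
    (hf : Irreducible f) (hm : f.Monic) {M : ℕ} (h : g ∣ f.comp (X ^ M)) :
    f.natDegree ∣ g.natDegree := by
  have : Fact (Irreducible g) := ⟨hg⟩
  have := hgm.finite_adjoinRoot
  have h1 := natDegree_minpoly_pow_dvd (F := F) (AdjoinRoot.root g) M
  rwa [minpoly_root_pow_eq hg hf hm h, AdjoinRoot.minpoly_root_of_monic hg.ne_zero hgm] at h1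

theorem minpoly_of_pow_eq_root {f : F[X]} [Fact (Irreducible f)] (hm : f.Monic) {M : ℕ}
    {y : AdjoinRoot f} (hy : y ^ M = AdjoinRoot.root f) :
    (minpoly F y).natDegree = f.natDegree ∧ minpoly F y ∣ f.comp (X ^ M) := by
  have hf : Irreducible f := Fact.out
  have := hm.finite_adjoinRoot
  have hint : IsIntegral F y := Algebra.IsIntegral.isIntegral y
  refine ⟨le_antisymm ?_ ?_, ?_⟩
  · exact (minpoly.natDegree_le (A := F) y).trans_eq (AdjoinRoot.finrank_eq_natDegree f)
  · have := natDegree_minpoly_pow_dvd (F := F) y M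
    rw [hy, AdjoinRoot.minpoly_root_of_monic hf.ne_zero hm] at this
    exact Nat.le_of_dvd (minpoly.natDegree_pos hint) this
  · apply minpoly.dvd
    rw [aeval_comp, map_pow, aeval_X, hy, AdjoinRoot.aeval_eq, AdjoinRoot.mk_self]

theorem irreducible_comp_X_pow_or {f : F[X]} (hf : Irreducible f) (hm : f.Monic) {M : ℕ}
    (hM : M.Prime) :
    Irreducible (f.comp (X ^ M)) ∨ ∃ y : AdjoinRoot f, y ^ M = AdjoinRoot.root f := by
  by_cases h : ∃ y : AdjoinRoot f, y ^ M = AdjoinRoot.root f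
  · exact Or.inr h
  · left
    refine Polynomial.irreducible_comp hm (monic_X_pow M) hf ?_
    intro E _ _ x hx
    rw [Polynomial.map_pow, map_X]
    apply X_pow_sub_C_irreducible_of_prime hM
    intro b hb
    have hint : IsIntegral F x := by
      by_contra hni
      rw [minpoly.eq_zero hni] at hx
      exact hf.ne_zero hx.symm
    subst hx
    apply h
    refine ⟨(IntermediateField.adjoinRootEquivAdjoin F hint).symm b, ?_⟩
    rw [← map_pow, hb, AlgEquiv.symm_apply_eq,
      IntermediateField.adjoinRootEquivAdjoin_apply_root]

theorem irreducible_comp_X_pow_or_exists_factor {f : F[X]} (hf : Irreducible f) (hm : f.Monic)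
    {M : ℕ} (hM : M.Prime) :
    Irreducible (f.comp (X ^ M)) ∨
      ∃ g : F[X], g.Monic ∧ Irreducible g ∧ g.natDegree = f.natDegree ∧ g ∣ f.comp (X ^ M) := by
  refine (irreducible_comp_X_pow_or hf hm hM).imp_right ?_
  rintro ⟨y, hy⟩
  have : Fact (Irreducible f) := ⟨hf⟩
  have := hm.finite_adjoinRoot
  have hint : IsIntegral F y := Algebra.IsIntegral.isIntegral y
  exact ⟨minpoly F y, minpoly.monic hint, minpoly.irreducible hint,
    (minpoly_of_pow_eq_root hm hy).1, (minpoly_of_pow_eq_root hm hy).2⟩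

theorem AdjoinRoot.root_ne_zero_of_coeff_zero_ne_zero {f : F[X]} [Fact (Irreducible f)]
    (h0 : f.coeff 0 ≠ 0) : AdjoinRoot.root f ≠ 0 := by
  intro hr
  have h1 : aeval (AdjoinRoot.root f) f = 0 := by rw [AdjoinRoot.aeval_eq, AdjoinRoot.mk_self]
  rw [hr, aeval_def, eval₂_at_zero] at h1
  exact h0 (by simpa using h1)

/-- A self-conjugate irreducible polynomial yields a conjugation on its root field. -/
theorem IsSCIM.exists_conj (hσ : ∀ x, σ (σ x) = x) {f : F[X]} [Fact (Irreducible f)]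
    (hf : IsSCIM σ f) :
    ∃ τ : AdjoinRoot f →+* AdjoinRoot f,
      (∀ a, τ (algebraMap F _ a) = algebraMap F _ (σ a)) ∧
      τ (AdjoinRoot.root f) = (AdjoinRoot.root f)⁻¹ ∧ ∀ x, τ (τ x) = x := by
  obtain ⟨hm, hi, h0, ht⟩ := hf
  have hr := AdjoinRoot.root_ne_zero_of_coeff_zero_ne_zero h0
  have hr' : (AdjoinRoot.root f)⁻¹ ≠ 0 := inv_ne_zero hr
  let _ : Invertible (AdjoinRoot.root f)⁻¹ := invertibleOfNonzero hr'
  have key : f.eval₂ ((AdjoinRoot.of f).comp σ) (AdjoinRoot.root f)⁻¹ = 0 := by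
    rw [← eval₂_map, ← eval₂_reverse_eq_zero_iff, invOf_eq_inv, inv_inv]
    have h1 : eval₂ (AdjoinRoot.of f) (AdjoinRoot.root f) (tildePoly σ f) = 0 := by
      rw [ht]; exact AdjoinRoot.eval₂_root f
    rw [tildePoly, eval₂_mul, eval₂_C] at h1
    refine (mul_eq_zero.1 h1).resolve_left ?_
    simpa using h0
  refine ⟨AdjoinRoot.lift _ _ key, fun a => ?_, ?_, ?_⟩
  · rw [AdjoinRoot.algebraMap_eq, AdjoinRoot.lift_of]; rfl
  · exact AdjoinRoot.lift_root _
  · have : (AdjoinRoot.lift _ _ key).comp (AdjoinRoot.lift _ _ key) = RingHom.id _ := by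
      apply AdjoinRoot.ringHom_ext
      · ext a
        simp [hσ]
      · simp
    exact fun x => RingHom.congr_fun this x

/-- The minimal polynomial of an element inverted by a conjugation is self-conjugate. -/
theorem isSCIM_minpoly {E : Type*} [Field E] [Algebra F E] [FiniteDimensional F E] (τ : E →+* E)
    (hτ : ∀ a, τ (algebraMap F E a) = algebraMap F E (σ a)) {y : E} (hy : y * τ y = 1) :
    IsSCIM σ (minpoly F y) := by
  have hint : IsIntegral F y := Algebra.IsIntegral.isIntegral y
  have hy0 : y ≠ 0 := left_ne_zero_of_mul_eq_one hy
  have h0 : (minpoly F y).coeff 0 ≠ 0 := minpoly.coeff_zero_ne_zero hint hy0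
  have h1 := aeval_inv_tildePoly σ τ hτ hy0 (minpoly.aeval F y)
  have h2 : (τ y)⁻¹ = y := inv_eq_of_mul_eq_one_left hy
  rw [h2] at h1
  exact ⟨minpoly.monic hint, minpoly.irreducible hint, h0,
    eq_of_monic_of_dvd_of_natDegree_le (minpoly.monic hint) (monic_tildePoly σ h0)
      (minpoly.dvd F y h1) (natDegree_tildePoly σ h0).le⟩

/-- For odd prime `M`, a self-conjugate irreducible `f` that is not an `M̃`-power polynomial
remains irreducible after substituting `x ^ M`. -/
theorem IsSCIM.irreducible_comp_X_pow (hσ : ∀ x, σ (σ x) = x) {f : F[X]} (hf : IsSCIM σ f)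
    {M : ℕ} (hM : M.Prime) (hM2 : M ≠ 2) (hn : ¬ IsMtildePowerPoly σ M f) :
    Irreducible (f.comp (X ^ M)) := by
  refine (irreducible_comp_X_pow_or hf.2.1 hf.1 hM).resolve_right ?_
  rintro ⟨y, hy⟩
  have : Fact (Irreducible f) := ⟨hf.2.1⟩
  have := hf.1.finite_adjoinRoot
  obtain ⟨τ, hτ, hτr, hττ⟩ := hf.exists_conj σ hσ
  have hr := AdjoinRoot.root_ne_zero_of_coeff_zero_ne_zero hf.2.2.1
  obtain ⟨k, hk⟩ := hM.odd_of_ne_two hM2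
  set η := y * τ y with hη
  have hηM : η ^ M = 1 := by rw [hη, mul_pow, ← map_pow, hy, hτr, mul_inv_cancel₀ hr]
  have hτη : τ η = η := by rw [hη, map_mul, hττ, mul_comm]
  have hz : (y * η ^ k) ^ M = AdjoinRoot.root f := by
    rw [mul_pow, hy, ← pow_mul, mul_comm k, pow_mul, hηM, one_pow, mul_one]
  have hz' : (y * η ^ k) * τ (y * η ^ k) = 1 := by
    calc (y * η ^ k) * τ (y * η ^ k) = (y * τ y) * η ^ (2 * k) := by
          rw [map_mul, map_pow, hτη]; ring
      _ = η ^ M := by rw [← hη, hk]; ring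
      _ = 1 := hηM
  obtain ⟨h1, h2⟩ := minpoly_of_pow_eq_root hf.1 hz
  exact hn ⟨hf, minpoly F (y * η ^ k), isSCIM_minpoly σ τ hτ hz', h1, h2⟩

/-- Self-conjugate irreducible polynomials have odd degree. -/
theorem IsSCIM.odd_natDegree [Fintype F] {p ℓ q : ℕ} (hp : p.Prime) (hq : q = p ^ ℓ)
    (hF : Fintype.card F = q ^ 2) (hσq : ∀ x : F, σ x = x ^ q)
    (hσ : ∀ x, σ (σ x) = x) {f : F[X]} (hf : IsSCIM σ f) : Odd f.natDegree := by
  have : Fact (Irreducible f) := ⟨hf.2.1⟩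
  have hfd := hf.1.finite_adjoinRoot
  have : Finite (AdjoinRoot f) := Module.finite_of_finite F
  obtain ⟨τ, hτ, hτr, hττ⟩ := hf.exists_conj σ hσ
  have : Fact p.Prime := ⟨hp⟩
  have hcF : CharP F p := charP_of_card_eq_sq hp (hq ▸ hF)
  have hcE : CharP (AdjoinRoot f) p := charP_of_injective_algebraMap (algebraMap F _).injective p
  let ψ : AdjoinRoot f →ₐ[F] AdjoinRoot f :=
    { τ.comp (iterateFrobenius (AdjoinRoot f) p ℓ) with
      commutes' := fun a => by
        change τ (iterateFrobenius (AdjoinRoot f) p ℓ (algebraMap F _ a)) = algebraMap F _ a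
        rw [iterateFrobenius_def, ← hq, ← map_pow, ← hσq, hτ, hσ] }
  have hψ : ∀ x, ψ x = τ (x ^ q) := by
    intro x
    change τ (iterateFrobenius (AdjoinRoot f) p ℓ x) = _
    rw [iterateFrobenius_def, hq]
  have hψψ : ψ ^ 2 = FiniteField.frobeniusAlgHom F (AdjoinRoot f) := by
    refine AlgHom.ext fun x => ?_
    rw [pow_two, AlgHom.mul_apply, hψ, hψ, map_pow, map_pow, map_pow, hττ, ← pow_mul,
      FiniteField.frobeniusAlgHom_apply, hF, sq]
  obtain ⟨i, hi⟩ := (FiniteField.bijective_frobeniusAlgHom_pow F (AdjoinRoot f)).2 ψ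
  have hi : FiniteField.frobeniusAlgHom F (AdjoinRoot f) ^ (i : ℕ) = ψ := hi
  rw [← hi, ← pow_mul] at hψψ
  have hd := FiniteField.orderOf_frobeniusAlgHom F (AdjoinRoot f)
  rw [AdjoinRoot.finrank_eq_natDegree] at hd
  have hfin : IsOfFinOrder (FiniteField.frobeniusAlgHom F (AdjoinRoot f)) := by
    rw [← orderOf_pos_iff, hd]; exact hf.2.1.natDegree_pos
  have hmod : (i : ℕ) * 2 ≡ 1 [MOD f.natDegree] := by
    rw [← hd]
    apply (hfin.pow_eq_pow_iff_modEq).1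
    rw [hψψ, pow_one]
  by_contra hodd
  rw [Nat.not_odd_iff_even] at hodd
  have := hmod.of_dvd hodd.two_dvd
  simp [Nat.ModEq, Nat.mul_mod_left] at this

end SCIM

/-! ### Semisimple isometries of hermitian forms -/

section Isometries

variable {F : Type*} [Field F] (σ : F →+* F)

/-- A matrix of finite order prime to the characteristic. -/
def HasTameOrder {ι : Type*} [Fintype ι] [DecidableEq ι] (A : Matrix ι ι F) : Prop :=
  ∃ N : ℕ, (N : F) ≠ 0 ∧ A ^ N = 1

section HasTameOrder

variable {ι κ : Type*} [Fintype ι] [DecidableEq ι] [Fintype κ] [DecidableEq κ]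
  {A : Matrix ι ι F}

theorem HasTameOrder.isUnit (h : HasTameOrder A) : IsUnit A := by
  obtain ⟨N, hN, hA⟩ := h
  refine IsUnit.of_pow_eq_one hA ?_
  rintro rfl
  simp at hN

theorem HasTameOrder.squarefree_minpoly (h : HasTameOrder A) : Squarefree (minpoly F A) := by
  obtain ⟨N, hN, hA⟩ := h
  have h1 : Squarefree (X ^ N - 1 : F[X]) := (X_pow_sub_one_separable_iff.2 hN).squarefree
  exact h1.squarefree_of_dvd (minpoly.dvd F A (by simp [hA]))

theorem HasTameOrder.isSemisimple (h : HasTameOrder A) : Module.End.IsSemisimple (Matrix.toLin' A) := by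
  refine Module.End.isSemisimple_of_squarefree_aeval_eq_zero (p := minpoly F A)
    h.squarefree_minpoly ?_
  rw [← Matrix.minpoly_toLin', minpoly.aeval]

theorem hasTameOrder_of_squarefree_minpoly [Finite F] (hA : IsUnit A)
    (hs : Squarefree (minpoly F A)) : HasTameOrder A := by
  obtain ⟨p, hcp⟩ := CharP.exists F
  have hp : p.Prime := (CharP.char_is_prime_or_zero F p).resolve_right
    (CharP.char_ne_zero_of_finite F p)
  have : Fact p.Prime := ⟨hp⟩
  obtain ⟨u, rfl⟩ := hA
  have ho : orderOf u ≠ 0 := (orderOf_pos u).ne'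
  obtain ⟨a, N, hN, hoN⟩ := Nat.exists_eq_pow_mul_and_not_dvd ho p hp.ne_one
  have hu : (u : Matrix ι ι F) ^ orderOf u = 1 := by
    rw [← Units.val_pow_eq_pow_val, pow_orderOf_eq_one, Units.val_one]
  refine ⟨N, by rwa [Ne, CharP.cast_eq_zero_iff F p], ?_⟩
  have h1 : minpoly F (u : Matrix ι ι F) ∣ (X ^ N - 1) ^ p ^ a := by
    apply minpoly.dvd
    rw [sub_pow_char_pow, ← pow_mul, one_pow, mul_comm, ← hoN]
    simp [hu]
  have h2 : minpoly F (u : Matrix ι ι F) ∣ X ^ N - 1 :=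
    (hs.dvd_pow_iff_dvd (pow_ne_zero _ hp.ne_zero)).1 h1
  have h3 := aeval_eq_zero_of_dvd_aeval_eq_zero h2 (minpoly.aeval F (u : Matrix ι ι F))
  rwa [map_sub, map_pow, aeval_X, map_one, sub_eq_zero] at h3

theorem HasTameOrder.pow (h : HasTameOrder A) (M : ℕ) : HasTameOrder (A ^ M) := by
  obtain ⟨N, hN, hA⟩ := h
  exact ⟨N, hN, by rw [← pow_mul, mul_comm, pow_mul, hA, one_pow]⟩

theorem HasTameOrder.of_pow {M : ℕ} (hM : (M : F) ≠ 0) (h : HasTameOrder (A ^ M)) :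
    HasTameOrder A := by
  obtain ⟨N, hN, hA⟩ := h
  exact ⟨M * N, by push_cast; exact mul_ne_zero hM hN, by rw [pow_mul, hA]⟩

theorem HasTameOrder.map_transpose_inv (h : HasTameOrder A) :
    HasTameOrder ((A.map σ)ᵀ)⁻¹ := by
  obtain ⟨N, hN, hA⟩ := h
  refine ⟨N, hN, ?_⟩
  have : A.map σ ^ N = 1 := by
    have := congrArg σ.mapMatrix hA
    rwa [map_pow, map_one] at this
  rw [Matrix.inv_pow', ← Matrix.transpose_pow, this, Matrix.transpose_one, inv_one]

theorem HasTameOrder.transpose (h : HasTameOrder A) : HasTameOrder Aᵀ := by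
  obtain ⟨N, hN, hA⟩ := h
  exact ⟨N, hN, by rw [← Matrix.transpose_pow, hA, Matrix.transpose_one]⟩

theorem HasTameOrder.fromBlocks {B : Matrix κ κ F} (hA : HasTameOrder A) (hB : HasTameOrder B) :
    HasTameOrder (Matrix.fromBlocks A 0 0 B) := by
  obtain ⟨N, hN, hA⟩ := hA
  obtain ⟨K, hK, hB⟩ := hB
  refine ⟨N * K, by push_cast; exact mul_ne_zero hN hK, ?_⟩
  rw [Matrix.fromBlocks_diagonal_pow, pow_mul, hA, one_pow, mul_comm, pow_mul, hB, one_pow,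
    Matrix.fromBlocks_one]

end HasTameOrder

/-- `c` is the characteristic polynomial of the `M`-th power of a semisimple isometry of a
nondegenerate hermitian form. -/
def IsIsometryPowerCharpoly (M : ℕ) (c : F[X]) : Prop :=
  ∃ (n : ℕ) (A J : Matrix (Fin n) (Fin n) F), HasTameOrder A ∧ IsUnit J ∧ (J.map σ)ᵀ = J ∧
    A * J * (A.map σ)ᵀ = J ∧ (A ^ M).charpoly = c

theorem IsIsometryPowerCharpoly.of_fintype {M : ℕ} {ι : Type*} [Fintype ι] [DecidableEq ι]
    {A J : Matrix ι ι F} (hA : HasTameOrder A) (hJ : IsUnit J) (hs : (J.map σ)ᵀ = J)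
    (h : A * J * (A.map σ)ᵀ = J) : IsIsometryPowerCharpoly σ M (A ^ M).charpoly := by
  let e := Fintype.equivFin ι
  let r := Matrix.reindexAlgEquiv F F e
  have hr : ∀ B : Matrix ι ι F, r B = Matrix.reindex e e B := fun _ => rfl
  have hmt : ∀ B : Matrix ι ι F, ((r B).map σ)ᵀ = r (B.map σ)ᵀ := fun B => by
    ext i j; simp [hr]
  refine ⟨_, r A, r J, ?_, hJ.map r, ?_, ?_, ?_⟩
  · obtain ⟨N, hN, hA⟩ := hA
    exact ⟨N, hN, by rw [← map_pow, hA, map_one]⟩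
  · rw [hmt, hs]
  · rw [hmt, ← map_mul, ← map_mul, h]
  · rw [← map_pow, hr, Matrix.charpoly_reindex]

theorem isIsometryPowerCharpoly_one (M : ℕ) : IsIsometryPowerCharpoly σ M 1 :=
  ⟨0, 1, 1, ⟨1, by simp, by simp⟩, isUnit_one, Subsingleton.elim _ _, Subsingleton.elim _ _,
    Matrix.charpoly_isEmpty⟩

theorem IsIsometryPowerCharpoly.mul {M : ℕ} {c d : F[X]} (hc : IsIsometryPowerCharpoly σ M c)
    (hd : IsIsometryPowerCharpoly σ M d) : IsIsometryPowerCharpoly σ M (c * d) := by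
  obtain ⟨n, A, J, hA, hJ, hJs, h, rfl⟩ := hc
  obtain ⟨m, B, K, hB, hK, hKs, h', rfl⟩ := hd
  have key := IsIsometryPowerCharpoly.of_fintype σ (M := M) (A := Matrix.fromBlocks A 0 0 B)
    (J := Matrix.fromBlocks J 0 0 K) (hA.fromBlocks hB) ?_ ?_ ?_
  · rwa [Matrix.fromBlocks_diagonal_pow, Matrix.charpoly_fromBlocks_zero₁₂] at key
  · rw [Matrix.isUnit_iff_isUnit_det] at *
    rw [Matrix.det_fromBlocks_zero₁₂]
    exact hJ.mul hK
  · simp [Matrix.fromBlocks_map, Matrix.fromBlocks_transpose, hJs, hKs]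
  · simp [Matrix.fromBlocks_map, Matrix.fromBlocks_transpose, Matrix.fromBlocks_multiply, h, h']

theorem isIsometryPowerCharpoly_mul_tildePoly (hσ : ∀ x, σ (σ x) = x) {M : ℕ} {ι : Type*}
    [Fintype ι] [DecidableEq ι] {A : Matrix ι ι F} (hA : HasTameOrder A) :
    IsIsometryPowerCharpoly σ M ((A ^ M).charpoly * tildePoly σ (A ^ M).charpoly) := by
  have hu := isUnit_map_transpose σ hA.isUnit
  have hu' := (Matrix.isUnit_iff_isUnit_det _).1 hu
  set D := ((A.map σ)ᵀ)⁻¹ with hD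
  have h1 : D * (A.map σ)ᵀ = 1 := Matrix.nonsing_inv_mul _ hu'
  have h2 : A * (D.map σ)ᵀ = 1 := by
    have h3 := congrArg Matrix.transpose (congrArg σ.mapMatrix h1)
    rw [map_mul, map_one, Matrix.transpose_mul, Matrix.transpose_one] at h3
    have h4 : (σ.mapMatrix (A.map σ)ᵀ)ᵀ = A := by ext i j; simp [hσ]
    rw [h4] at h3
    exact h3
  have key := IsIsometryPowerCharpoly.of_fintype σ (M := M) (A := Matrix.fromBlocks A 0 0 D)
    (J := Matrix.fromBlocks 0 1 1 0) (hA.fromBlocks (hA.map_transpose_inv σ)) ?_ ?_ ?_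
  · rw [Matrix.fromBlocks_diagonal_pow, Matrix.charpoly_fromBlocks_zero₁₂] at key
    have h5 : (D ^ M).charpoly = tildePoly σ (A ^ M).charpoly := by
      rw [← charpoly_conj_transpose_inv σ (hA.pow M).isUnit, hD, Matrix.inv_pow',
        ← Matrix.transpose_pow]
      have : (A ^ M).map σ = A.map σ ^ M := map_pow σ.mapMatrix A M
      rw [this]
    rwa [h5] at key
  · exact IsUnit.of_mul_eq_one (Matrix.fromBlocks 0 1 1 0)
      (by simp [Matrix.fromBlocks_multiply])
  · simp [Matrix.fromBlocks_map, Matrix.fromBlocks_transpose]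
  · simp [Matrix.fromBlocks_map, Matrix.fromBlocks_transpose, Matrix.fromBlocks_multiply, h1, h2]

section RootMatrix

theorem charpoly_leftMulMatrix_root_pow {g : F[X]} (hg : Irreducible g) (hm : g.Monic)
    {ι : Type*} [Fintype ι] [DecidableEq ι] (b : Module.Basis ι F (AdjoinRoot g)) (M : ℕ) :
    (Algebra.leftMulMatrix b (AdjoinRoot.root g) ^ M).charpoly = powPoly M g := by
  have := hm.finite_adjoinRoot
  rw [← map_pow, ← charpoly_mulLeft_root_pow hg]
  exact LinearMap.charpoly_toMatrix (LinearMap.mulLeft F (AdjoinRoot.root g ^ M)) b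

variable [Finite F]

theorem exists_root_pow_eq_one {g : F[X]} (hg : Irreducible g) (hm : g.Monic)
    (h0 : g.coeff 0 ≠ 0) : ∃ N : ℕ, (N : F) ≠ 0 ∧ AdjoinRoot.root g ^ N = 1 := by
  have : Fact (Irreducible g) := ⟨hg⟩
  have := hm.finite_adjoinRoot
  have : Finite (AdjoinRoot g) := Module.finite_of_finite F
  have := Fintype.ofFinite (AdjoinRoot g)
  refine ⟨Fintype.card (AdjoinRoot g) - 1, ?_,
    FiniteField.pow_card_sub_one_eq_one _ (AdjoinRoot.root_ne_zero_of_coeff_zero_ne_zero h0)⟩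
  intro h
  have h1 := congrArg (algebraMap F (AdjoinRoot g)) h
  rw [map_natCast, Nat.cast_sub Fintype.card_pos, map_zero, FiniteField.cast_card_eq_zero] at h1
  simp at h1

theorem hasTameOrder_leftMulMatrix {g : F[X]} (hg : Irreducible g) (hm : g.Monic)
    (h0 : g.coeff 0 ≠ 0) {ι : Type*} [Fintype ι] [DecidableEq ι]
    (b : Module.Basis ι F (AdjoinRoot g)) :
    HasTameOrder (Algebra.leftMulMatrix b (AdjoinRoot.root g)) := by
  obtain ⟨N, hN, h⟩ := exists_root_pow_eq_one hg hm h0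
  exact ⟨N, hN, by rw [← map_pow, h, map_one]⟩

theorem isIsometryPowerCharpoly_powPoly_mul (hσ : ∀ x, σ (σ x) = x) {g : F[X]}
    (hg : Irreducible g) (hm : g.Monic) (h0 : g.coeff 0 ≠ 0) (M : ℕ) :
    IsIsometryPowerCharpoly σ M (powPoly M g * tildePoly σ (powPoly M g)) := by
  have := hm.finite_adjoinRoot
  let b := Module.finBasis F (AdjoinRoot g)
  rw [← charpoly_leftMulMatrix_root_pow hg hm b M]
  exact isIsometryPowerCharpoly_mul_tildePoly σ hσ (hasTameOrder_leftMulMatrix hg hm h0 b)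

/-- Multiplication by the root of a self-conjugate irreducible polynomial is an isometry of the
hermitian trace form. -/
theorem IsSCIM.isIsometryPowerCharpoly_powPoly (hσ : ∀ x, σ (σ x) = x) {g : F[X]}
    (hg : IsSCIM σ g) (M : ℕ) : IsIsometryPowerCharpoly σ M (powPoly M g) := by
  have : Fact (Irreducible g) := ⟨hg.2.1⟩
  have := hg.1.finite_adjoinRoot
  have : Finite (AdjoinRoot g) := Module.finite_of_finite F
  obtain ⟨τ, hτ, hτr, hττ⟩ := hg.exists_conj σ hσ
  let b := Module.finBasis F (AdjoinRoot g)
  let T := Algebra.trace F (AdjoinRoot g)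
  let A := (Algebra.leftMulMatrix b (AdjoinRoot.root g))ᵀ
  let J : Matrix _ _ F := Matrix.of fun i j => T (b i * τ (b j))
  have hr : AdjoinRoot.root g * τ (AdjoinRoot.root g) = 1 := by
    rw [hτr, mul_inv_cancel₀ (AdjoinRoot.root_ne_zero_of_coeff_zero_ne_zero hg.2.2.1)]
  have hτsmul : ∀ (a : F) x, τ (a • x) = σ a • τ x := by
    intro a x
    rw [Algebra.smul_def, map_mul, hτ, ← Algebra.smul_def]
  have hAb : ∀ i, ∑ k, A i k • b k = AdjoinRoot.root g * b i := by
    intro i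
    simp [A, Algebra.leftMulMatrix_eq_repr_mul, b.sum_repr]
  let eσ : F ≃+* F := RingEquiv.ofRingHom σ σ (RingHom.ext hσ) (RingHom.ext hσ)
  let eτ : AdjoinRoot g ≃+* AdjoinRoot g :=
    RingEquiv.ofRingHom τ τ (RingHom.ext hττ) (RingHom.ext hττ)
  have hT : ∀ x, σ (T x) = T (τ x) := by
    intro x
    have := Algebra.trace_eq_of_equiv_equiv eσ eτ (RingHom.ext fun a => (hτ a).symm) x
    change eσ (T x) = _
    rw [this, RingEquiv.apply_symm_apply]
    rfl
  have hAt : HasTameOrder A := (hasTameOrder_leftMulMatrix hg.2.1 hg.1 hg.2.2.1 b).transpose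
  have hc : (A ^ M).charpoly = powPoly M g := by
    rw [← charpoly_leftMulMatrix_root_pow hg.2.1 hg.1 b M, ← Matrix.charpoly_transpose,
      Matrix.transpose_pow, Matrix.transpose_transpose]
  rw [← hc]
  refine IsIsometryPowerCharpoly.of_fintype σ (J := J) hAt ?_ ?_ ?_
  · rw [Matrix.isUnit_iff_isUnit_det, isUnit_iff_ne_zero]
    intro hdet
    obtain ⟨v, hv, hJv⟩ := Matrix.exists_mulVec_eq_zero_iff.2 hdet
    apply hv
    set y := ∑ j, σ (v j) • b j with hy
    have hy' : τ y = ∑ j, v j • τ (b j) := by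
      rw [hy, map_sum]
      simp only [hτsmul, hσ]
    have h1 : ∀ i, T (b i * τ y) = 0 := by
      intro i
      have := congrFun hJv i
      simp only [Matrix.mulVec, dotProduct, J, Matrix.of_apply, Pi.zero_apply] at this
      rw [hy', Finset.mul_sum, map_sum, ← this]
      refine Finset.sum_congr rfl fun j _ => ?_
      rw [mul_smul_comm, map_smul, smul_eq_mul, mul_comm]
    have h2 : ∀ x, T (x * τ y) = 0 := by
      intro x
      rw [← b.sum_repr x, Finset.sum_mul, map_sum]
      refine Finset.sum_eq_zero fun i _ => ?_
      rw [smul_mul_assoc, map_smul, h1, smul_zero]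
    have h3 : τ y = 0 :=
      (traceForm_nondegenerate F (AdjoinRoot g)).2 (τ y) fun x => h2 x
    have h4 : y = 0 := by simpa using h3
    have h5 := Fintype.linearIndependent_iff.1 b.linearIndependent _ h4
    funext j
    simpa using h5 j
  · ext i j
    simp only [Matrix.transpose_apply, Matrix.map_apply, J, Matrix.of_apply]
    rw [hT, map_mul, hττ, mul_comm]
  · ext i j
    have h1 : (A * J * (A.map σ)ᵀ) i j = T ((∑ k, A i k • b k) * τ (∑ l, A j l • b l)) := by
      simp only [Matrix.mul_apply, Matrix.transpose_apply, Matrix.map_apply, map_sum, hτsmul,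
        Finset.sum_mul, Finset.mul_sum, J, Matrix.of_apply]
      refine Finset.sum_congr rfl fun l _ => Finset.sum_congr rfl fun k _ => ?_
      rw [smul_mul_smul_comm, map_smul, smul_eq_mul]
      ring
    rw [h1, hAb, hAb, map_mul τ]
    have : AdjoinRoot.root g * b i * (τ (AdjoinRoot.root g) * τ (b j)) =
        (AdjoinRoot.root g * τ (AdjoinRoot.root g)) * (b i * τ (b j)) := by ring
    rw [this, hr, one_mul]
    rfl

end RootMatrix

end Isometries

/-! ### Characteristic polynomials of semisimple `M`-th powers -/

section PowerCond

open UniqueFactorizationMonoid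
open scoped Classical

variable {F : Type*} [Field F] (σ : F →+* F)

/-- The multiplicity of the monic irreducible polynomial `f` in `c`. -/
noncomputable def factorCount (f c : F[X]) : ℕ := (normalizedFactors c).count f

theorem factorCount_mul (f : F[X]) {a b : F[X]} (ha : a ≠ 0) (hb : b ≠ 0) :
    factorCount f (a * b) = factorCount f a + factorCount f b := by
  rw [factorCount, normalizedFactors_mul ha hb, Multiset.count_add, factorCount, factorCount]

theorem factorCount_pow (f a : F[X]) (k : ℕ) : factorCount f (a ^ k) = k * factorCount f a := by
  rw [factorCount, normalizedFactors_pow, Multiset.count_nsmul, factorCount]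

theorem factorCount_self {f : F[X]} (hf : Irreducible f) (hm : f.Monic) : factorCount f f = 1 := by
  rw [factorCount, normalizedFactors_irreducible hf, hm.normalize_eq_self,
    Multiset.count_singleton_self]

theorem pow_dvd_iff_le_factorCount {f c : F[X]} (hf : Irreducible f) (hm : f.Monic) (hc : c ≠ 0)
    {k : ℕ} : f ^ k ∣ c ↔ k ≤ factorCount f c := by
  rw [pow_dvd_iff_le_emultiplicity, emultiplicity_eq_count_normalizedFactors hf hc,
    hm.normalize_eq_self, factorCount, Nat.cast_le]

theorem factorCount_eq_zero {f c : F[X]} (hf : Irreducible f) (hm : f.Monic) (hc : c ≠ 0)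
    (h : ¬ f ∣ c) : factorCount f c = 0 := by
  by_contra h0
  apply h
  have := (pow_dvd_iff_le_factorCount hf hm hc).2 (Nat.one_le_iff_ne_zero.2 h0)
  rwa [pow_one] at this

theorem factorCount_multiset_prod (f : F[X]) (s : Multiset F[X]) (hs : ∀ a ∈ s, a ≠ 0) :
    factorCount f s.prod = (s.map (factorCount f)).sum := by
  induction s using Multiset.induction_on with
  | empty => simp [factorCount]
  | cons a s ih =>
    have h1 : ∀ b ∈ s, b ≠ 0 := fun b hb => hs b (Multiset.mem_cons_of_mem hb)
    have h2 : s.prod ≠ 0 := Multiset.prod_ne_zero fun h0 => h1 0 h0 rfl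
    rw [Multiset.prod_cons, factorCount_mul f (hs a (Multiset.mem_cons_self a s)) h2, ih h1,
      Multiset.map_cons, Multiset.sum_cons]

theorem factorCount_tildePoly_le (hσ : ∀ x, σ (σ x) = x) {f c : F[X]} (hf : Irreducible f)
    (hm : f.Monic) (hf0 : f.coeff 0 ≠ 0) (hc : c ≠ 0) (ht : tildePoly σ c = c) :
    factorCount f c ≤ factorCount (tildePoly σ f) c := by
  rw [← pow_dvd_iff_le_factorCount (irreducible_tildePoly σ hσ hm hf0 hf)
    (monic_tildePoly σ hf0) hc, ← tildePoly_pow, ← ht]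
  apply tildePoly_dvd
  rw [ht]
  exact (pow_dvd_iff_le_factorCount hf hm hc).2 le_rfl

theorem factorCount_tildePoly (hσ : ∀ x, σ (σ x) = x) {f c : F[X]} (hf : Irreducible f)
    (hm : f.Monic) (hf0 : f.coeff 0 ≠ 0) (hc : c ≠ 0) (ht : tildePoly σ c = c) :
    factorCount (tildePoly σ f) c = factorCount f c := by
  refine le_antisymm ?_ (factorCount_tildePoly_le σ hσ hf hm hf0 hc ht)
  have := factorCount_tildePoly_le σ hσ (irreducible_tildePoly σ hσ hm hf0 hf)
    (monic_tildePoly σ hf0) (coeff_zero_tildePoly_ne_zero σ hm hf0) hc ht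
  rwa [tildePoly_tildePoly σ hσ hm hf0] at this

/-- The irreducible polynomials that may occur with arbitrary multiplicity in the characteristic
polynomial of a semisimple `M`-th power. -/
def IsPowerFactor (M : ℕ) (f : F[X]) : Prop :=
  IsMtildePowerPoly σ M f ∨ (¬ IsSCIM σ f ∧ IsMPowerPoly M f)

theorem powPoly_eq {f g : F[X]} (hg : Irreducible g) (hf : Irreducible f) (hm : f.Monic) {M : ℕ}
    (h : g ∣ f.comp (X ^ M)) : powPoly M g = f ^ (g.natDegree / f.natDegree) := by
  rw [powPoly, minpoly_root_pow_eq hg hf hm h]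

theorem factorCount_powPoly {f g : F[X]} (hg : Irreducible g) (hgm : g.Monic)
    (hf : Irreducible f) (hm : f.Monic) {M : ℕ} :
    factorCount f (powPoly M g) =
      if g ∣ f.comp (X ^ M) then g.natDegree / f.natDegree else 0 := by
  split_ifs with h
  · rw [powPoly_eq hg hf hm h, factorCount_pow, factorCount_self hf hm, mul_one]
  · have : Fact (Irreducible g) := ⟨hg⟩
    have := hgm.finite_adjoinRoot
    have hint : IsIntegral F (AdjoinRoot.root g ^ M) := Algebra.IsIntegral.isIntegral _
    refine factorCount_eq_zero hf hm (pow_ne_zero _ (minpoly.ne_zero hint)) fun hd => h ?_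
    have h1 := hf.prime.dvd_of_dvd_pow hd
    have h2 := eq_of_monic_of_associated hm (minpoly.monic hint)
      (hf.associated_of_dvd (minpoly.irreducible hint) h1)
    rw [dvd_comp_X_pow_iff, h2, minpoly.aeval]

theorem powPoly_ne_zero {g : F[X]} (hg : Irreducible g) (hgm : g.Monic) (M : ℕ) :
    powPoly M g ≠ 0 := by
  have : Fact (Irreducible g) := ⟨hg⟩
  have := hgm.finite_adjoinRoot
  exact pow_ne_zero _ (minpoly.ne_zero (Algebra.IsIntegral.isIntegral _))

theorem irreducible_comp_or_eq_two_of_not_isPowerFactor (hσ : ∀ x, σ (σ x) = x) {M : ℕ}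
    (hM : M.Prime) {f : F[X]} (hf : Irreducible f) (hm : f.Monic)
    (hn : ¬ IsPowerFactor σ M f) :
    Irreducible (f.comp (X ^ M)) ∨ (M = 2 ∧ IsSCIM σ f) := by
  by_cases hs : IsSCIM σ f
  · by_cases hM2 : M = 2
    · exact Or.inr ⟨hM2, hs⟩
    · exact Or.inl (hs.irreducible_comp_X_pow σ hσ hM hM2 fun h => hn (Or.inl h))
  · left
    refine (irreducible_comp_X_pow_or_exists_factor hf hm hM).resolve_right ?_
    rintro ⟨g, -, hgi, hgd, hg⟩
    exact hn (Or.inr ⟨hs, hm, hf, g, hgi, hgd, hg⟩)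

/-- In the characteristic polynomial of the `M`-th power of a semisimple isometry, the irreducible
polynomials that are not power factors occur with multiplicity divisible by `M`. -/
theorem dvd_factorCount_charpoly_pow (hσ : ∀ x, σ (σ x) = x) {M : ℕ} (hM : M.Prime) {n : ℕ}
    {A : Matrix (Fin n) (Fin n) F} (hA : HasTameOrder A)
    (ht : tildePoly σ A.charpoly = A.charpoly) {f : F[X]} (hf : Irreducible f) (hm : f.Monic)
    (hn : ¬ IsPowerFactor σ M f) : M ∣ factorCount f (A ^ M).charpoly := by
  obtain ⟨G, hG, hG1, hG2⟩ := Module.End.IsSemisimple.exists_charpoly_pow_eq M _ rfl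
    hA.isSemisimple
  rw [← Matrix.toLin'_pow, Matrix.charpoly_toLin'] at hG2
  rw [Matrix.charpoly_toLin'] at hG1
  have hcount : factorCount f (A ^ M).charpoly = (G.map fun g =>
      if g ∣ f.comp (X ^ M) then g.natDegree / f.natDegree else 0).sum := by
    rw [hG2, factorCount_multiset_prod, Multiset.map_map]
    · congr 1
      refine Multiset.map_congr rfl fun g hg => ?_
      exact factorCount_powPoly (hG g hg).2 (hG g hg).1 hf hm
    · intro a ha
      obtain ⟨g, hg, rfl⟩ := Multiset.mem_map.1 ha
      exact powPoly_ne_zero (hG g hg).2 (hG g hg).1 M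
  rw [hcount]
  have hfpos := hf.natDegree_pos
  rcases irreducible_comp_or_eq_two_of_not_isPowerFactor σ hσ hM hf hm hn with hirr | ⟨rfl, hs⟩
  · apply Multiset.dvd_sum
    intro x hx
    obtain ⟨g, hg, rfl⟩ := Multiset.mem_map.1 hx
    split_ifs with hd
    · have := eq_of_monic_of_associated (hG g hg).1 (monic_comp_X_pow hM.pos hm)
        ((hG g hg).2.associated_of_dvd hirr hd)
      rw [this, natDegree_comp_X_pow, Nat.mul_div_cancel_left _ hfpos]
    · exact dvd_zero _
  · have hGn : normalizedFactors A.charpoly = G := by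
      rw [hG1, normalizedFactors_prod_eq _ fun g hg => (hG g hg).2]
      conv_rhs => rw [← Multiset.map_id G]
      exact Multiset.map_congr rfl fun g hg => (hG g hg).1.normalize_eq_self
    have hGc : ∀ g, Multiset.count g G = factorCount g A.charpoly := fun g => by
      rw [factorCount, hGn]
    have h0 : ∀ g ∈ G, g.coeff 0 ≠ 0 := fun g hg =>
      coeff_zero_ne_zero_of_dvd (hG1 ▸ Multiset.dvd_prod hg)
        (charpoly_coeff_zero_ne_zero hA.isUnit)
    have hGt : ∀ g ∈ G, Multiset.count (tildePoly σ g) G = Multiset.count g G := fun g hg => by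
      rw [hGc, hGc, factorCount_tildePoly σ hσ (hG g hg).2 (hG g hg).1 (h0 g hg)
        A.charpoly_monic.ne_zero ht]
    have hdt : ∀ g ∈ G, g ∣ f.comp (X ^ 2) → tildePoly σ g ∣ f.comp (X ^ 2) := by
      intro g _ hd
      have := tildePoly_dvd σ hd
      rwa [tildePoly_comp_X_pow σ two_pos, hs.2.2.2] at this
    have hdt' : ∀ g ∈ G, (tildePoly σ g ∣ f.comp (X ^ 2) ↔ g ∣ f.comp (X ^ 2)) := by
      intro g hg
      refine ⟨fun hd => ?_, hdt g hg⟩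
      have := tildePoly_dvd σ hd
      rwa [tildePoly_comp_X_pow σ two_pos, hs.2.2.2,
        tildePoly_tildePoly σ hσ (hG g hg).1 (h0 g hg)] at this
    have hz := (ZMod.natCast_eq_zero_iff ((G.map fun g =>
      if g ∣ f.comp (X ^ 2) then g.natDegree / f.natDegree else 0).sum) 2).1
    apply hz
    rw [Finset.sum_multiset_map_count, Nat.cast_sum]
    refine Finset.sum_involution (fun g _ => tildePoly σ g) ?_ ?_ ?_ ?_
    · intro g hg
      rw [Multiset.mem_toFinset] at hg
      simp only [hGt g hg, hdt' g hg, natDegree_tildePoly σ (h0 g hg)]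
      exact CharTwo.add_self_eq_zero _
    · intro g hg hne hgt
      rw [Multiset.mem_toFinset] at hg
      apply hne
      have hgs : IsSCIM σ g := ⟨(hG g hg).1, (hG g hg).2, h0 g hg, hgt⟩
      by_cases hd : g ∣ f.comp (X ^ 2)
      · obtain ⟨k, hk⟩ := natDegree_dvd_of_dvd_comp_X_pow hgs.2.1 hgs.1 hf hm hd
        have hle := natDegree_le_of_dvd hd (monic_comp_X_pow two_pos hm).ne_zero
        rw [natDegree_comp_X_pow, hk] at hle
        have hk2 : k ≤ 2 := Nat.le_of_mul_le_mul_left hle hfpos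
        have hgpos := hgs.2.1.natDegree_pos
        have hk0 : k ≠ 0 := by rintro rfl; omega
        have hk1 : k ≠ 1 := by
          rintro rfl
          exact hn (Or.inl ⟨hs, g, hgs, by rw [hk, mul_one], hd⟩)
        have hk3 : k = 2 := by omega
        rw [if_pos hd, hk, Nat.mul_div_cancel_left _ hfpos, hk3, nsmul_eq_mul, Nat.cast_mul]
        exact mul_eq_zero_of_right _ (by decide)
      · simp [hd]
    · intro g hg
      rw [Multiset.mem_toFinset] at hg ⊢
      rw [← Multiset.count_pos, hGt g hg]
      exact Multiset.count_pos.2 hg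
    · intro g hg
      rw [Multiset.mem_toFinset] at hg
      exact tildePoly_tildePoly σ hσ (hG g hg).1 (h0 g hg)

/-- The characteristic polynomials of semisimple `M`-th powers in the unitary groups. -/
def PowerCond (M : ℕ) (c : F[X]) : Prop :=
  c.Monic ∧ c.coeff 0 ≠ 0 ∧ tildePoly σ c = c ∧
    ∀ f : F[X], f.Monic → Irreducible f → ¬ IsPowerFactor σ M f → M ∣ factorCount f c

theorem isSCIM_iff {f : F[X]} (hm : f.Monic) (hf : Irreducible f) (h0 : f.coeff 0 ≠ 0) :
    IsSCIM σ f ↔ tildePoly σ f = f :=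
  ⟨fun h => h.2.2.2, fun h => ⟨hm, hf, h0, h⟩⟩

theorem IsMPowerPoly.tildePoly (hσ : ∀ x, σ (σ x) = x) {M : ℕ} (hM : 0 < M) {f : F[X]}
    (h0 : f.coeff 0 ≠ 0) (h : IsMPowerPoly M f) : IsMPowerPoly M (tildePoly σ f) := by
  obtain ⟨hm, hf, h, hh, hd, hdvd⟩ := h
  have hnm : (normalize h).Monic := monic_normalize hh.ne_zero
  have hni : Irreducible (normalize h) := (normalize_associated h).irreducible_iff.2 hh
  have hnd : normalize h ∣ f.comp (X ^ M) := (normalize_associated h).dvd.trans hdvd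
  have hnc : (normalize h).coeff 0 ≠ 0 :=
    coeff_zero_ne_zero_of_dvd hnd (by rwa [coeff_zero_comp_X_pow hM])
  refine ⟨monic_tildePoly σ h0, irreducible_tildePoly σ hσ hm h0 hf, _,
    irreducible_tildePoly σ hσ hnm hnc hni, ?_, ?_⟩
  · rw [natDegree_tildePoly σ hnc, natDegree_tildePoly σ h0, ← hd]
    exact natDegree_eq_of_degree_eq degree_normalize
  · rw [← tildePoly_comp_X_pow σ hM]
    exact tildePoly_dvd σ hnd

theorem IsPowerFactor.tildePoly (hσ : ∀ x, σ (σ x) = x) {M : ℕ} (hM : 0 < M) {f : F[X]}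
    (h0 : f.coeff 0 ≠ 0) (h : IsPowerFactor σ M f) : IsPowerFactor σ M (tildePoly σ f) := by
  rcases h with h | ⟨hs, h⟩
  · rw [h.1.2.2.2]
    exact Or.inl h
  · refine Or.inr ⟨fun hs' => hs ?_, h.tildePoly σ hσ hM h0⟩
    have h1 := hs'.2.2.2
    rw [tildePoly_tildePoly σ hσ h.1 h0] at h1
    rw [isSCIM_iff σ h.1 h.2.1 h0, ← h1]

/-- The smallest self-conjugate polynomial divisible by `f`. -/
noncomputable def selfConjBase (f : F[X]) : F[X] :=
  if IsSCIM σ f then f else f * tildePoly σ f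

/-- The indecomposable characteristic polynomial of a semisimple `M`-th power attached to `f`. -/
noncomputable def powerAtom (M : ℕ) (f : F[X]) : F[X] :=
  if IsPowerFactor σ M f then selfConjBase σ f else selfConjBase σ f ^ M

section Atoms

variable {f : F[X]}

theorem monic_selfConjBase (hm : f.Monic) (h0 : f.coeff 0 ≠ 0) : (selfConjBase σ f).Monic := by
  unfold selfConjBase
  split_ifs
  · exact hm
  · exact hm.mul (monic_tildePoly σ h0)

theorem coeff_zero_selfConjBase_ne_zero (hm : f.Monic) (h0 : f.coeff 0 ≠ 0) :
    (selfConjBase σ f).coeff 0 ≠ 0 := by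
  unfold selfConjBase
  split_ifs
  · exact h0
  · rw [mul_coeff_zero]
    exact mul_ne_zero h0 (coeff_zero_tildePoly_ne_zero σ hm h0)

theorem tildePoly_selfConjBase (hσ : ∀ x, σ (σ x) = x) (hm : f.Monic) (h0 : f.coeff 0 ≠ 0) :
    tildePoly σ (selfConjBase σ f) = selfConjBase σ f := by
  unfold selfConjBase
  split_ifs with h
  · exact h.2.2.2
  · rw [tildePoly_mul, tildePoly_tildePoly σ hσ hm h0, mul_comm]

theorem eq_or_eq_tildePoly_of_dvd_selfConjBase (hσ : ∀ x, σ (σ x) = x) (hm : f.Monic)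
    (hf : Irreducible f) (h0 : f.coeff 0 ≠ 0) {g : F[X]} (hgm : g.Monic) (hg : Irreducible g)
    (h : g ∣ selfConjBase σ f) : g = f ∨ g = tildePoly σ f := by
  unfold selfConjBase at h
  split_ifs at h with hs
  · exact Or.inl (eq_of_monic_of_associated hgm hm (hg.associated_of_dvd hf h))
  · rcases hg.prime.dvd_or_dvd h with h | h
    · exact Or.inl (eq_of_monic_of_associated hgm hm (hg.associated_of_dvd hf h))
    · exact Or.inr (eq_of_monic_of_associated hgm (monic_tildePoly σ h0)
        (hg.associated_of_dvd (irreducible_tildePoly σ hσ hm h0 hf) h))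

theorem isPowerFactor_of_dvd_selfConjBase (hσ : ∀ x, σ (σ x) = x) {M : ℕ} (hM : 0 < M)
    (hm : f.Monic) (hf : Irreducible f) (h0 : f.coeff 0 ≠ 0) {g : F[X]} (hgm : g.Monic)
    (hg : Irreducible g) (h : g ∣ selfConjBase σ f) (hp : IsPowerFactor σ M f) :
    IsPowerFactor σ M g := by
  rcases eq_or_eq_tildePoly_of_dvd_selfConjBase σ hσ hm hf h0 hgm hg h with rfl | rfl
  · exact hp
  · exact hp.tildePoly σ hσ hM h0

theorem powerCond_powerAtom (hσ : ∀ x, σ (σ x) = x) {M : ℕ} (hM : 0 < M) (hm : f.Monic)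
    (hf : Irreducible f) (h0 : f.coeff 0 ≠ 0) : PowerCond σ M (powerAtom σ M f) := by
  have h1 := monic_selfConjBase σ hm h0
  have h2 := coeff_zero_selfConjBase_ne_zero σ hm h0
  have h3 := tildePoly_selfConjBase σ hσ hm h0
  unfold powerAtom
  split_ifs with hp
  · refine ⟨h1, h2, h3, fun g hgm hg hgn => ?_⟩
    rw [factorCount_eq_zero hg hgm h1.ne_zero]
    · exact dvd_zero _
    · exact fun hd => hgn (isPowerFactor_of_dvd_selfConjBase σ hσ hM hm hf h0 hgm hg hd hp)
  · refine ⟨h1.pow M, ?_, ?_, fun g hgm hg hgn => ?_⟩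
    · rw [coeff_zero_eq_eval_zero, eval_pow, ← coeff_zero_eq_eval_zero]
      exact pow_ne_zero _ h2
    · rw [tildePoly_pow, h3]
    · rw [factorCount_pow]
      exact dvd_mul_right _ _

theorem powerAtom_tildePoly (hσ : ∀ x, σ (σ x) = x) {M : ℕ} (hM : 0 < M) (hm : f.Monic)
    (hf : Irreducible f) (h0 : f.coeff 0 ≠ 0) :
    powerAtom σ M (tildePoly σ f) = powerAtom σ M f := by
  have hpf : IsPowerFactor σ M (tildePoly σ f) ↔ IsPowerFactor σ M f := by
    refine ⟨fun h => ?_, fun h => h.tildePoly σ hσ hM h0⟩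
    have := h.tildePoly σ hσ hM (coeff_zero_tildePoly_ne_zero σ hm h0)
    rwa [tildePoly_tildePoly σ hσ hm h0] at this
  have hb : selfConjBase σ (tildePoly σ f) = selfConjBase σ f := by
    by_cases hs : IsSCIM σ f
    · rw [hs.2.2.2]
    · have hs' : ¬ IsSCIM σ (tildePoly σ f) := by
        intro hs'
        have h1 := hs'.2.2.2
        rw [tildePoly_tildePoly σ hσ hm h0] at h1
        exact hs ((isSCIM_iff σ hm hf h0).2 h1.symm)
      rw [selfConjBase, selfConjBase, if_neg hs, if_neg hs', tildePoly_tildePoly σ hσ hm h0,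
        mul_comm]
  rw [powerAtom, powerAtom, hb]
  exact if_congr hpf rfl rfl

theorem powerAtom_eq_of_dvd (hσ : ∀ x, σ (σ x) = x) {M : ℕ} (hM : 0 < M) (hm : f.Monic)
    (hf : Irreducible f) (h0 : f.coeff 0 ≠ 0) {g : F[X]} (hgm : g.Monic) (hg : Irreducible g)
    (h : g ∣ powerAtom σ M f) : powerAtom σ M g = powerAtom σ M f := by
  have h1 : g ∣ selfConjBase σ f := by
    unfold powerAtom at h
    split_ifs at h
    · exact h
    · exact hg.prime.dvd_of_dvd_pow h
  rcases eq_or_eq_tildePoly_of_dvd_selfConjBase σ hσ hm hf h0 hgm hg h1 with rfl | rfl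
  · rfl
  · exact powerAtom_tildePoly σ hσ hM hm hf h0

theorem dvd_powerAtom {M : ℕ} (hM : M ≠ 0) : f ∣ powerAtom σ M f := by
  have h1 : f ∣ selfConjBase σ f := by
    unfold selfConjBase
    split_ifs
    · exact dvd_rfl
    · exact dvd_mul_right _ _
  unfold powerAtom
  split_ifs
  · exact h1
  · exact dvd_pow h1 hM

theorem powerAtom_dvd (hσ : ∀ x, σ (σ x) = x) {M : ℕ} (hm : f.Monic)
    (hf : Irreducible f) (h0 : f.coeff 0 ≠ 0) {c : F[X]} (hc : PowerCond σ M c) (h : f ∣ c) :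
    powerAtom σ M f ∣ c := by
  obtain ⟨hcm, hc0, hct, hcM⟩ := hc
  have key : ∀ k, f ^ k ∣ c → selfConjBase σ f ^ k ∣ c := by
    intro k hk
    unfold selfConjBase
    split_ifs with hs
    · exact hk
    · have hk' : tildePoly σ f ^ k ∣ c := by
        rw [← tildePoly_pow, ← hct]
        exact tildePoly_dvd σ hk
      rw [mul_pow]
      refine IsCoprime.mul_dvd (IsCoprime.pow ?_) hk hk'
      refine (hf.coprime_iff_not_dvd).2 fun hd => hs ?_
      rw [isSCIM_iff σ hm hf h0]
      exact (eq_of_monic_of_associated hm (monic_tildePoly σ h0)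
        (hf.associated_of_dvd (irreducible_tildePoly σ hσ hm h0 hf) hd)).symm
  unfold powerAtom
  split_ifs with hp
  · simpa using key 1 (by simpa using h)
  · apply key
    rw [pow_dvd_iff_le_factorCount hf hm hcm.ne_zero]
    refine Nat.le_of_dvd ?_ (hcM f hm hf hp)
    rw [Nat.pos_iff_ne_zero, ← Nat.one_le_iff_ne_zero,
      ← pow_dvd_iff_le_factorCount hf hm hcm.ne_zero, pow_one]
    exact h

theorem PowerCond.of_mul {M : ℕ} {a b : F[X]} (ha : PowerCond σ M a)
    (hab : PowerCond σ M (a * b)) : PowerCond σ M b := by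
  obtain ⟨ham, ha0, hat, haM⟩ := ha
  obtain ⟨hm, h0, ht, hM⟩ := hab
  have hb : b.Monic := ham.of_mul_monic_left hm
  refine ⟨hb, ?_, ?_, fun f hfm hf hn => ?_⟩
  · rw [mul_coeff_zero] at h0
    exact right_ne_zero_of_mul h0
  · rw [tildePoly_mul, hat] at ht
    exact mul_left_cancel₀ ham.ne_zero ht
  · have := hM f hfm hf hn
    rw [factorCount_mul f ham.ne_zero hb.ne_zero] at this
    exact (Nat.dvd_add_right (haM f hfm hf hn)).1 this

/-- The indecomposable characteristic polynomials of semisimple `M`-th powers. -/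
def IsPowerAtom (M : ℕ) (P : F[X]) : Prop :=
  ∃ f : F[X], f.Monic ∧ Irreducible f ∧ f.coeff 0 ≠ 0 ∧ P = powerAtom σ M f

theorem IsPowerAtom.powerCond (hσ : ∀ x, σ (σ x) = x) {M : ℕ} (hM : 0 < M) {P : F[X]}
    (h : IsPowerAtom σ M P) : PowerCond σ M P := by
  obtain ⟨f, hm, hf, h0, rfl⟩ := h
  exact powerCond_powerAtom σ hσ hM hm hf h0

theorem IsPowerAtom.natDegree_pos (hσ : ∀ x, σ (σ x) = x) {M : ℕ} (hM : 0 < M) {P : F[X]}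
    (h : IsPowerAtom σ M P) : 0 < P.natDegree := by
  have hP := (h.powerCond σ hσ hM).1.ne_zero
  obtain ⟨f, hm, hf, h0, rfl⟩ := h
  exact hf.natDegree_pos.trans_le (natDegree_le_of_dvd (dvd_powerAtom σ hM.ne') hP)

theorem IsPowerAtom.isCoprime (hσ : ∀ x, σ (σ x) = x) {M : ℕ} (hM : 0 < M) {P Q : F[X]}
    (hP : IsPowerAtom σ M P) (hQ : IsPowerAtom σ M Q) (hPQ : P ≠ Q) : IsCoprime P Q := by
  by_contra hc
  rw [← EuclideanDomain.gcd_isUnit_iff] at hc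
  obtain ⟨g, hgm, hg, hgd⟩ := exists_monic_irreducible_factor _ hc
  have hg1 := hgd.trans (EuclideanDomain.gcd_dvd_left P Q)
  have hg2 := hgd.trans (EuclideanDomain.gcd_dvd_right P Q)
  obtain ⟨f, hm, hf, h0, rfl⟩ := hP
  obtain ⟨f', hm', hf', h0', rfl⟩ := hQ
  exact hPQ ((powerAtom_eq_of_dvd σ hσ hM hm hf h0 hgm hg hg1).symm.trans
    (powerAtom_eq_of_dvd σ hσ hM hm' hf' h0' hgm hg hg2))

theorem PowerCond.exists_multiset (hσ : ∀ x, σ (σ x) = x) {M : ℕ} (hM : 0 < M) (n : ℕ) :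
    ∀ {c : F[X]}, c.natDegree = n → PowerCond σ M c →
      ∃ s : Multiset F[X], (∀ P ∈ s, IsPowerAtom σ M P) ∧ s.prod = c := by
  induction n using Nat.strong_induction_on with
  | _ n ih =>
    intro c hn hc
    by_cases hu : IsUnit c
    · exact ⟨0, by simp, by simpa using (hc.1.eq_one_of_isUnit hu).symm⟩
    · obtain ⟨f, hm, hf, hd⟩ := exists_monic_irreducible_factor c hu
      have h0 := coeff_zero_ne_zero_of_dvd hd hc.2.1
      have hP : IsPowerAtom σ M (powerAtom σ M f) := ⟨f, hm, hf, h0, rfl⟩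
      obtain ⟨b, rfl⟩ := powerAtom_dvd σ hσ hm hf h0 hc hd
      have hb := (hP.powerCond σ hσ hM).of_mul σ hc
      have hdeg := natDegree_mul (hP.powerCond σ hσ hM).1.ne_zero hb.1.ne_zero
      have := hP.natDegree_pos σ hσ hM
      obtain ⟨s, hs, hsb⟩ := ih _ (by omega) rfl hb
      refine ⟨powerAtom σ M f ::ₘ s, ?_, by rw [Multiset.prod_cons, hsb]⟩
      intro P hP'
      rcases Multiset.mem_cons.1 hP' with rfl | hP'
      · exact hP
      · exact hs P hP'

theorem IsPowerAtom.isIsometryPowerCharpoly [Finite F] (hσ : ∀ x, σ (σ x) = x) {M : ℕ}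
    (hM : M.Prime) {P : F[X]} (h : IsPowerAtom σ M P) : IsIsometryPowerCharpoly σ M P := by
  obtain ⟨f, hm, hf, h0, rfl⟩ := h
  have hfpos := hf.natDegree_pos
  unfold powerAtom
  split_ifs with hp
  · rcases hp with ⟨hs, g, hgs, hgd, hg⟩ | ⟨hs, -, -, g, hgi, hgd, hg⟩
    · rw [selfConjBase, if_pos hs]
      have := hgs.isIsometryPowerCharpoly_powPoly σ hσ M
      rwa [powPoly_eq hgs.2.1 hf hm hg, hgd, Nat.div_self hfpos, pow_one] at this
    · rw [selfConjBase, if_neg hs]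
      have hnm : (normalize g).Monic := monic_normalize hgi.ne_zero
      have hni : Irreducible (normalize g) := (normalize_associated g).irreducible_iff.2 hgi
      have hnd : normalize g ∣ f.comp (X ^ M) := (normalize_associated g).dvd.trans hg
      have hnc : (normalize g).coeff 0 ≠ 0 :=
        coeff_zero_ne_zero_of_dvd hnd (by rwa [coeff_zero_comp_X_pow hM.pos])
      have hndeg : (normalize g).natDegree = f.natDegree :=
        (natDegree_eq_of_degree_eq degree_normalize).trans hgd
      have := isIsometryPowerCharpoly_powPoly_mul σ hσ hni hnm hnc M
      rwa [powPoly_eq hni hf hm hnd, hndeg, Nat.div_self hfpos, pow_one] at this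
  · have h0' : (f.comp (X ^ M)).coeff 0 ≠ 0 := by rwa [coeff_zero_comp_X_pow hM.pos]
    have hm' := monic_comp_X_pow hM.pos hm
    by_cases hirr : Irreducible (f.comp (X ^ M))
    · have hpow : powPoly M (f.comp (X ^ M)) = f ^ M := by
        rw [powPoly_eq hirr hf hm dvd_rfl, natDegree_comp_X_pow, Nat.mul_div_cancel_left _ hfpos]
      unfold selfConjBase
      split_ifs with hs
      · have hs' : IsSCIM σ (f.comp (X ^ M)) :=
          ⟨hm', hirr, h0', by rw [tildePoly_comp_X_pow σ hM.pos, hs.2.2.2]⟩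
        have := hs'.isIsometryPowerCharpoly_powPoly σ hσ M
        rwa [hpow] at this
      · have := isIsometryPowerCharpoly_powPoly_mul σ hσ hirr hm' h0' M
        rwa [hpow, tildePoly_pow, ← mul_pow] at this
    · obtain ⟨hM2, hs⟩ :=
        (irreducible_comp_or_eq_two_of_not_isPowerFactor σ hσ hM hf hm hp).resolve_left hirr
      obtain ⟨g, hgm, hgi, hgd, hg⟩ :=
        (irreducible_comp_X_pow_or_exists_factor hf hm hM).resolve_left hirr
      rw [selfConjBase, if_pos hs]
      have := isIsometryPowerCharpoly_powPoly_mul σ hσ hgi hgm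
        (coeff_zero_ne_zero_of_dvd hg h0') M
      rwa [powPoly_eq hgi hf hm hg, hgd, Nat.div_self hfpos, pow_one, hs.2.2.2, ← sq,
        ← hM2] at this

theorem PowerCond.isIsometryPowerCharpoly [Finite F] (hσ : ∀ x, σ (σ x) = x) {M : ℕ}
    (hM : M.Prime) {c : F[X]} (hc : PowerCond σ M c) : IsIsometryPowerCharpoly σ M c := by
  obtain ⟨s, hs, rfl⟩ := hc.exists_multiset σ hσ hM.pos _ rfl
  clear hc
  induction s using Multiset.induction_on with
  | empty => exact isIsometryPowerCharpoly_one σ M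
  | cons P s ih =>
    rw [Multiset.prod_cons]
    exact ((hs P (Multiset.mem_cons_self P s)).isIsometryPowerCharpoly σ hσ hM).mul σ
      (ih fun Q hQ => hs Q (Multiset.mem_cons_of_mem hQ))

end Atoms

end PowerCond

/-! ### Conjugacy classes of semisimple `M`-th powers -/

section Classes

variable {F : Type*} [Field F] (σ : F →+* F) {n : ℕ}

theorem IsUnitaryMat.pow {A : Matrix (Fin n) (Fin n) F} (hA : IsUnitaryMat σ A) (k : ℕ) :
    IsUnitaryMat σ (A ^ k) := by
  refine ⟨hA.1.pow k, ?_⟩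
  have hmap : ∀ k, (A ^ k).map σ = A.map σ ^ k := fun k => map_pow σ.mapMatrix A k
  induction k with
  | zero => simp
  | succ k ih =>
    rw [hmap] at ih
    rw [hmap, pow_succ, pow_succ', Matrix.transpose_mul]
    calc A ^ k * A * antidiagMat F n * ((A.map σ ^ k)ᵀ * (A.map σ)ᵀ)
        = A ^ k * (A * antidiagMat F n * (A.map σ)ᵀ) * (A.map σ ^ k)ᵀ := by
          rw [← Matrix.transpose_mul, ← pow_succ', pow_succ, Matrix.transpose_mul]
          simp only [Matrix.mul_assoc]
      _ = antidiagMat F n := by rw [hA.2, ih]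

theorem IsUnitaryMat.tildePoly_charpoly {A : Matrix (Fin n) (Fin n) F} (hA : IsUnitaryMat σ A) :
    tildePoly σ A.charpoly = A.charpoly :=
  tildePoly_charpoly_of_form σ hA.1 isUnit_antidiagMat hA.2

theorem ConjU.charpoly_eq {A B : Matrix (Fin n) (Fin n) F} (h : ConjU σ A B) :
    A.charpoly = B.charpoly := by
  obtain ⟨P, ⟨⟨u, rfl⟩, -⟩, rfl⟩ := h
  rw [Matrix.charpoly_units_conj]

theorem exists_conj_of_charpoly_eq {A B : Matrix (Fin n) (Fin n) F} (hA : HasTameOrder A)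
    (hB : HasTameOrder B) (h : A.charpoly = B.charpoly) :
    ∃ P : Matrix (Fin n) (Fin n) F, IsUnit P ∧ B * P = P * A := by
  obtain ⟨e, he⟩ := Module.End.IsSemisimple.exists_intertwine_of_charpoly_eq _ rfl
    hA.isSemisimple hB.isSemisimple (by rwa [Matrix.charpoly_toLin', Matrix.charpoly_toLin'])
  refine ⟨LinearMap.toMatrix' (e : (Fin n → F) →ₗ[F] (Fin n → F)), ?_, ?_⟩
  · refine IsUnit.of_mul_eq_one
      (LinearMap.toMatrix' (e.symm : (Fin n → F) →ₗ[F] (Fin n → F))) ?_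
    rw [← LinearMap.toMatrix'_comp]
    simp
  · apply (Matrix.toLin' (R := F) (m := Fin n) (n := Fin n)).injective
    rw [Matrix.toLin'_mul, Matrix.toLin'_mul, Matrix.toLin'_toMatrix']
    exact LinearMap.ext fun x => (he x).symm

variable [Finite F]

theorem PowerCond.exists_isUnitaryMat (hσ : ∀ x, σ (σ x) = x) (hne : ∃ x, σ x ≠ x) {M : ℕ}
    (hM : M.Prime) {c : F[X]} (hc : PowerCond σ M c) (hn : c.natDegree = n) :
    ∃ B : Matrix (Fin n) (Fin n) F, IsUnitaryMat σ B ∧ HasTameOrder B ∧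
      (B ^ M).charpoly = c := by
  obtain ⟨m, A, J, ⟨N, hN, hA⟩, hJ, hJs, h, rfl⟩ := hc.isIsometryPowerCharpoly σ hσ hM
  rw [Matrix.charpoly_natDegree_eq_dim, Fintype.card_fin] at hn
  subst hn
  obtain ⟨Y, ⟨u, rfl⟩, hY⟩ := exists_eq_mul_antidiagMat_mul σ hσ hne hJ hJs
  let U : Matrix (Fin m) (Fin m) F := u
  let V : Matrix (Fin m) (Fin m) F := ↑u⁻¹
  have hUV : U * V = 1 := u.mul_inv
  have hVU : V * U = 1 := u.inv_mul
  have hpow : ∀ k, (V * A * U) ^ k = V * A ^ k * U := by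
    intro k
    induction k with
    | zero => rw [pow_zero, pow_zero, Matrix.mul_one, hVU]
    | succ k ih =>
      calc (V * A * U) ^ (k + 1) = V * A ^ k * (U * V) * A * U := by
            rw [pow_succ, ih]; simp only [Matrix.mul_assoc]
        _ = V * A ^ (k + 1) * U := by
            rw [hUV, Matrix.mul_one, pow_succ]; simp only [Matrix.mul_assoc]
  have hAu : IsUnit A := HasTameOrder.isUnit ⟨N, hN, hA⟩
  have hUV' : (U.map σ)ᵀ * (V.map σ)ᵀ = 1 := by
    have : (V * U).map σ = V.map σ * U.map σ := Matrix.map_mul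
    rw [← Matrix.transpose_mul, ← this, hVU]
    simp
  refine ⟨V * A * U, ⟨(u⁻¹.isUnit.mul hAu).mul u.isUnit, ?_⟩, ⟨N, hN, ?_⟩, ?_⟩
  · calc V * A * U * antidiagMat F m * ((V * A * U).map σ)ᵀ
        = V * (A * (U * antidiagMat F m * (U.map σ)ᵀ) * (A.map σ)ᵀ) * (V.map σ)ᵀ := by
          rw [Matrix.map_mul, Matrix.map_mul, Matrix.transpose_mul, Matrix.transpose_mul]
          simp only [Matrix.mul_assoc]
      _ = V * (U * antidiagMat F m * (U.map σ)ᵀ) * (V.map σ)ᵀ := by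
          rw [← hY, h]
      _ = (V * U) * antidiagMat F m * ((U.map σ)ᵀ * (V.map σ)ᵀ) := by
          simp only [Matrix.mul_assoc]
      _ = antidiagMat F m := by rw [hVU, hUV', Matrix.one_mul, Matrix.mul_one]
  · rw [hpow, hA, Matrix.mul_one, hVU]
  · have := Matrix.charpoly_units_conj' u (A ^ M)
    rw [hpow]
    exact (by rw [← Matrix.coe_units_inv] at this; exact this)

/-- Conjugacy classes of semisimple `M`-th powers are classified by characteristic polynomials. -/
theorem numSSPowerClasses_eq (hσ : ∀ x, σ (σ x) = x) (hne : ∃ x, σ x ≠ x) {M : ℕ}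
    (hM : M.Prime) (hMF : (M : F) ≠ 0) (n : ℕ) :
    numSSPowerClasses σ M n = Nat.card {c : F[X] // PowerCond σ M c ∧ c.natDegree = n} := by
  have hcond : ∀ A : Matrix (Fin n) (Fin n) F, IsUnitaryMat σ A → Squarefree (minpoly F A) →
      IsMPowerInU σ M A → PowerCond σ M A.charpoly ∧ A.charpoly.natDegree = n := by
    rintro A hA hs ⟨B, hB, rfl⟩
    have hBt : HasTameOrder B := (hasTameOrder_of_squarefree_minpoly hA.1 hs).of_pow hMF
    refine ⟨⟨Matrix.charpoly_monic _, charpoly_coeff_zero_ne_zero hA.1,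
      hA.tildePoly_charpoly σ, fun f hm hf hn => ?_⟩, ?_⟩
    · exact dvd_factorCount_charpoly_pow σ hσ hM hBt (hB.tildePoly_charpoly σ) hf hm hn
    · rw [Matrix.charpoly_natDegree_eq_dim, Fintype.card_fin]
  refine Nat.card_congr (Equiv.ofBijective (Quot.lift
    (fun A => ⟨A.1.charpoly, hcond A.1 A.2.1 A.2.2.1 A.2.2.2⟩) fun A B hAB =>
      Subtype.ext (hAB.charpoly_eq σ)) ⟨?_, ?_⟩)
  · rintro ⟨A⟩ ⟨B⟩ hAB
    apply Quot.sound
    obtain ⟨P, hP, hPAB⟩ := exists_conj_of_charpoly_eq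
      (hasTameOrder_of_squarefree_minpoly A.2.1.1 A.2.2.1)
      (hasTameOrder_of_squarefree_minpoly B.2.1.1 B.2.2.1) (congrArg Subtype.val hAB)
    exact conjU_of_conj σ hσ hne A.2.1 B.2.1 hP hPAB
  · rintro ⟨c, hc, hn⟩
    obtain ⟨B, hB, hBt, rfl⟩ := hc.exists_isUnitaryMat σ hσ hne hM hn
    exact ⟨Quot.mk _ ⟨B ^ M, hB.pow σ M, (hBt.pow M).squarefree_minpoly, B, hB, rfl⟩, rfl⟩

end Classes

/-! ### Generating functions -/

section GeneratingFunctions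

open PowerSeries in
theorem PowerSeries.coeff_inv_one_sub_X_pow {w : ℕ} (hw : 0 < w) (k : ℕ) :
    coeff k ((1 - X ^ w : PowerSeries ℚ)⁻¹) = if w ∣ k then 1 else 0 := by
  have h : (1 - X ^ w : PowerSeries ℚ)⁻¹ =
      PowerSeries.mk fun k => if w ∣ k then (1 : ℚ) else 0 := by
    symm
    rw [PowerSeries.eq_inv_iff_mul_eq_one (by simp [hw.ne'])]
    ext m
    rw [mul_sub, mul_one, map_sub, coeff_mul_X_pow', coeff_mk, coeff_one]
    by_cases hm : w ≤ m
    · have h1 : w ∣ m - w ↔ w ∣ m := by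
        rw [Nat.dvd_sub_iff_left hm dvd_rfl]
      have h2 : m ≠ 0 := by omega
      rw [if_pos hm, coeff_mk, if_neg h2]
      simp [h1]
    · rw [if_neg hm, sub_zero]
      by_cases h0 : m = 0
      · simp [h0]
      · rw [if_neg h0, if_neg]
        exact fun hd => hm (Nat.le_of_dvd (Nat.pos_of_ne_zero h0) hd)
  rw [h, coeff_mk]

open PowerSeries in
theorem PowerSeries.coeff_prod_inv_one_sub_X_pow {T : Type*} [Fintype T] {w : T → ℕ}
    (hw : ∀ t, 0 < w t) (n : ℕ) :
    coeff n (∏ t, (1 - X ^ w t : PowerSeries ℚ)⁻¹) =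
      Nat.card {m : T → ℕ // ∑ t, m t * w t = n} := by
  classical
  rw [PowerSeries.coeff_prod]
  simp only [coeff_inv_one_sub_X_pow (hw _), Finset.prod_ite_zero, Finset.prod_const_one,
    Finset.mem_univ, true_implies]
  rw [Finset.sum_boole]
  congr 1
  rw [← Nat.card_eq_finsetCard]
  refine Nat.card_congr (Equiv.symm ?_)
  refine Equiv.ofBijective
    (fun m => ⟨Finsupp.equivFunOnFinite.symm fun t => m.1 t * w t, ?_⟩) ⟨?_, ?_⟩
  · simp only [Finset.mem_filter, Finset.mem_finsuppAntidiag]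
    refine ⟨⟨?_, fun t _ => Finset.mem_univ t⟩, fun t => ?_⟩
    · simpa using m.2
    · simp
  · intro m m' h
    apply Subtype.ext
    funext t
    have h1 := DFunLike.congr_fun (congrArg Subtype.val h) t
    simp only [Finsupp.equivFunOnFinite_symm_apply_apply] at h1
    exact Nat.eq_of_mul_eq_mul_right (hw t) h1
  · rintro ⟨l, hl⟩
    simp only [Finset.mem_filter, Finset.mem_finsuppAntidiag] at hl
    refine ⟨⟨fun t => l t / w t, ?_⟩, ?_⟩
    · rw [← hl.1.1]
      exact Finset.sum_congr rfl fun t _ => Nat.div_mul_cancel (hl.2 t)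
    · apply Subtype.ext
      ext t
      simp [Nat.div_mul_cancel (hl.2 t)]

theorem PowerSeries.X_pow_dvd_mul_sub_mul {K : ℕ} {a a' b b' : PowerSeries ℚ}
    (ha : PowerSeries.X ^ K ∣ a - a') (hb : PowerSeries.X ^ K ∣ b - b') :
    PowerSeries.X ^ K ∣ a * b - a' * b' := by
  have : a * b - a' * b' = a * (b - b') + (a - a') * b' := by ring
  rw [this]
  exact dvd_add (hb.mul_left a) (ha.mul_right b')

theorem PowerSeries.X_pow_dvd_prod_sub_one {K : ℕ} {f : ℕ → PowerSeries ℚ} (s : Finset ℕ)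
    (h : ∀ k ∈ s, PowerSeries.X ^ K ∣ f k - 1) : PowerSeries.X ^ K ∣ (∏ k ∈ s, f k) - 1 := by
  classical
  induction s using Finset.induction_on with
  | empty => simp
  | insert a s ha ih =>
    rw [Finset.prod_insert ha, ← mul_one (1 : PowerSeries ℚ)]
    exact X_pow_dvd_mul_sub_mul (h a (Finset.mem_insert_self a s))
      (ih fun k hk => h k (Finset.mem_insert_of_mem hk))

theorem PowerSeries.coeff_eq_of_X_pow_dvd_sub {K n : ℕ} {a b : PowerSeries ℚ}
    (h : PowerSeries.X ^ K ∣ a - b) (hn : n < K) :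
    PowerSeries.coeff n a = PowerSeries.coeff n b := by
  have := PowerSeries.X_pow_dvd_iff.1 h n hn
  rwa [map_sub, sub_eq_zero] at this

/-- An infinite product whose `k`-th factor is `1` modulo `X ^ (k + 1)` converges, and agrees
modulo `X ^ K` with the product of its first `K` factors. -/
theorem PowerSeries.multipliable_and_tprod {f : ℕ → PowerSeries ℚ}
    (hf : ∀ k, PowerSeries.X ^ (k + 1) ∣ f k - 1) :
    Multipliable f ∧ ∀ K, PowerSeries.X ^ K ∣ (∏' k, f k) - ∏ k ∈ Finset.range K, f k := by
  have key : ∀ K (s : Finset ℕ), Finset.range K ⊆ s →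
      PowerSeries.X ^ K ∣ (∏ k ∈ s, f k) - ∏ k ∈ Finset.range K, f k := by
    intro K s hs
    rw [← Finset.prod_sdiff hs]
    conv => enter [2, 2]; rw [← one_mul (∏ k ∈ Finset.range K, f k)]
    refine X_pow_dvd_mul_sub_mul (X_pow_dvd_prod_sub_one _ fun k hk => ?_) (by simp)
    rw [Finset.mem_sdiff, Finset.mem_range, not_lt] at hk
    exact (pow_dvd_pow _ (by omega)).trans (hf k)
  let g : PowerSeries ℚ := PowerSeries.mk fun n =>
    PowerSeries.coeff n (∏ k ∈ Finset.range (n + 1), f k)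
  have hg : HasProd f g := by
    let _ : TopologicalSpace ℚ := ⊥
    have : DiscreteTopology ℚ := ⟨rfl⟩
    refine (PowerSeries.WithPiTopology.tendsto_iff_coeff_tendsto ℚ _ _ _).2 fun n => ?_
    refine tendsto_const_nhds.congr' ?_
    filter_upwards [Filter.eventually_ge_atTop (Finset.range (n + 1))] with s hs
    rw [PowerSeries.coeff_mk]
    exact (coeff_eq_of_X_pow_dvd_sub (key (n + 1) s hs) (Nat.lt_succ_self n)).symm
  have hT2 : T2Space (PowerSeries ℚ) := by
    let _ : TopologicalSpace ℚ := ⊥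
    have : DiscreteTopology ℚ := ⟨rfl⟩
    exact PowerSeries.WithPiTopology.instT2Space ℚ
  refine ⟨hg.multipliable, fun K => ?_⟩
  rw [hg.tprod_eq, PowerSeries.X_pow_dvd_iff]
  intro n hn
  rw [map_sub, PowerSeries.coeff_mk, sub_eq_zero]
  exact (coeff_eq_of_X_pow_dvd_sub (key (n + 1) (Finset.range K)
    (Finset.range_mono hn)) (Nat.lt_succ_self n)).symm

theorem PowerSeries.inv_pow_eq {a : PowerSeries ℚ} (k : ℕ) : (a ^ k)⁻¹ = a⁻¹ ^ k := by
  induction k with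
  | zero => simp
  | succ k ih => rw [pow_succ, PowerSeries.mul_inv_rev, ih, pow_succ']

theorem PowerSeries.X_pow_dvd_inv_one_sub_X_pow_pow_sub_one {w K : ℕ} (hw : 0 < w) (hK : K ≤ w)
    (N : ℕ) : PowerSeries.X ^ K ∣ ((1 - PowerSeries.X ^ w : PowerSeries ℚ) ^ N)⁻¹ - 1 := by
  rw [inv_pow_eq]
  have h : PowerSeries.X ^ K ∣ ((1 - PowerSeries.X ^ w : PowerSeries ℚ))⁻¹ - 1 := by
    rw [PowerSeries.X_pow_dvd_iff]
    intro m hm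
    rw [map_sub, coeff_inv_one_sub_X_pow hw, PowerSeries.coeff_one]
    by_cases h0 : m = 0
    · simp [h0]
    · rw [if_neg h0, if_neg, sub_zero]
      exact fun hd => absurd (Nat.le_of_dvd (Nat.pos_of_ne_zero h0) hd) (by omega)
  induction N with
  | zero => simp
  | succ N ih =>
    have := X_pow_dvd_mul_sub_mul ih h
    rwa [mul_one, ← pow_succ] at this

/-- Monic polynomials that are products of pairwise coprime ones are counted by the product of
geometric series. -/
theorem natCard_eq_coeff_prod {F : Type*} [Field F] {T : Type*} [Fintype T] {P : T → F[X]}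
    (hm : ∀ t, (P t).Monic) (hd : ∀ t, 0 < (P t).natDegree)
    (hc : ∀ t u, t ≠ u → IsCoprime (P t) (P u)) {S : F[X] → Prop} {n : ℕ}
    (hS : ∀ m : T → ℕ, S (∏ t, P t ^ m t))
    (hS' : ∀ c, S c → c.natDegree = n → ∃ m : T → ℕ, c = ∏ t, P t ^ m t) :
    (Nat.card {c : F[X] // S c ∧ c.natDegree = n} : ℚ) =
      PowerSeries.coeff n (∏ t, (1 - PowerSeries.X ^ (P t).natDegree : PowerSeries ℚ)⁻¹) := by
  classical
  rw [PowerSeries.coeff_prod_inv_one_sub_X_pow hd]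
  have hdeg : ∀ m : T → ℕ, (∏ t, P t ^ m t).natDegree = ∑ t, m t * (P t).natDegree := by
    intro m
    rw [natDegree_prod_of_monic _ _ fun t _ => (hm t).pow _]
    exact Finset.sum_congr rfl fun t _ => natDegree_pow _ _
  have hle : ∀ m m' : T → ℕ, ∏ t, P t ^ m t = ∏ t, P t ^ m' t → ∀ t, m t ≤ m' t := by
    intro m m' h t
    have h1 : P t ^ m t ∣ P t ^ m' t * ∏ u ∈ Finset.univ.erase t, P u ^ m' u := by
      rw [Finset.mul_prod_erase Finset.univ (fun u => P u ^ m' u) (Finset.mem_univ t), ← h]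
      exact Finset.dvd_prod_of_mem _ (Finset.mem_univ t)
    have h2 : IsCoprime (P t ^ m t) (∏ u ∈ Finset.univ.erase t, P u ^ m' u) :=
      IsCoprime.prod_right fun u hu => (hc t u (Finset.ne_of_mem_erase hu).symm).pow
    have h3 := natDegree_le_of_dvd (h2.dvd_of_dvd_mul_right h1) ((hm t).pow _).ne_zero
    rw [natDegree_pow, natDegree_pow] at h3
    exact Nat.le_of_mul_le_mul_right h3 (hd t)
  congr 1
  refine Nat.card_congr (Equiv.symm (Equiv.ofBijective
    (fun m => ⟨∏ t, P t ^ m.1 t, hS m.1, by rw [hdeg, m.2]⟩) ⟨?_, ?_⟩))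
  · intro m m' h
    have h1 := congrArg Subtype.val h
    exact Subtype.ext (funext fun t => le_antisymm (hle _ _ h1 t) (hle _ _ h1.symm t))
  · rintro ⟨c, hc1, hc2⟩
    obtain ⟨m, rfl⟩ := hS' c hc1 hc2
    exact ⟨⟨m, by rw [← hdeg, hc2]⟩, rfl⟩

end GeneratingFunctions

/-! ### The generating function of semisimple `M`-th power classes -/

section MainCount

variable {F : Type*} [Field F] (σ : F →+* F)

/-- The unordered pairs `{f, f̃}` for `f` monic irreducible of degree `d` with `f(0) ≠ 0`, where
`b` and `e` record whether `f` is self-conjugate and whether it is a power factor. -/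
def conjPairs (M : ℕ) (b e : Bool) (d : ℕ) : Set (Sym2 F[X]) :=
  {B | ∃ f : F[X], f.Monic ∧ Irreducible f ∧ f.coeff 0 ≠ 0 ∧ (IsSCIM σ f ↔ b = true) ∧
    (IsPowerFactor σ M f ↔ e = true) ∧ f.natDegree = d ∧ B = s(f, tildePoly σ f)}

theorem finite_setOf_natDegree_eq [Finite F] (d : ℕ) : {f : F[X] | f.natDegree = d}.Finite := by
  refine Set.Finite.of_injOn (f := fun f : F[X] => fun i : Fin (d + 1) => f.coeff i)
    (t := Set.univ) (fun _ _ => Set.mem_univ _) ?_ (Set.toFinite _)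
  intro f hf g hg h
  have hf' : f.natDegree = d := hf
  have hg' : g.natDegree = d := hg
  ext i
  by_cases hi : i < d + 1
  · exact congrFun h ⟨i, hi⟩
  · rw [coeff_eq_zero_of_natDegree_lt (by omega),
      coeff_eq_zero_of_natDegree_lt (by omega)]

theorem finite_conjPairs [Finite F] (M : ℕ) (b e : Bool) (d : ℕ) :
    (conjPairs σ M b e d).Finite := by
  refine ((finite_setOf_natDegree_eq (F := F) d).image fun f => s(f, tildePoly σ f)).subset ?_
  rintro B ⟨f, -, -, -, -, -, hd, rfl⟩
  exact ⟨f, hd, rfl⟩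

theorem isNonSelfConj_iff {f : F[X]} :
    IsNonSelfConj σ f ↔ f.Monic ∧ Irreducible f ∧ f.coeff 0 ≠ 0 ∧ ¬ IsSCIM σ f := by
  constructor
  · rintro ⟨hm, hf, h0, hne⟩
    exact ⟨hm, hf, h0, fun h => hne h.2.2.2.symm⟩
  · rintro ⟨hm, hf, h0, hs⟩
    exact ⟨hm, hf, h0, fun h => hs ⟨hm, hf, h0, h.symm⟩⟩

theorem isPowerFactor_iff_of_not_isSCIM {M : ℕ} {f : F[X]} (hs : ¬ IsSCIM σ f) :
    IsPowerFactor σ M f ↔ IsMPowerPoly M f := by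
  refine ⟨?_, fun h => Or.inr ⟨hs, h⟩⟩
  rintro (h | h)
  · exact absurd h.1 hs
  · exact h.2

theorem isPowerFactor_iff_of_isSCIM {M : ℕ} {f : F[X]} (hs : IsSCIM σ f) :
    IsPowerFactor σ M f ↔ IsMtildePowerPoly σ M f := by
  refine ⟨?_, Or.inl⟩
  rintro (h | h)
  · exact h
  · exact absurd hs h.1

theorem rtildeM_eq (M d : ℕ) : RtildeM σ M d = Nat.card (conjPairs σ M false true d) := by
  refine Nat.card_congr (Equiv.subtypeEquivRight fun B => ?_)
  constructor
  · rintro ⟨g, hg, hd, hp, hB⟩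
    obtain ⟨hm, hi, h0, hs⟩ := (isNonSelfConj_iff σ).1 hg
    exact ⟨g, hm, hi, h0, by simpa using hs,
      by simpa using (isPowerFactor_iff_of_not_isSCIM σ hs).2 hp, hd, hB⟩
  · rintro ⟨g, hm, hi, h0, hs, hp, hd, hB⟩
    have hs' : ¬ IsSCIM σ g := by simpa using hs
    exact ⟨g, (isNonSelfConj_iff σ).2 ⟨hm, hi, h0, hs'⟩, hd,
      (isPowerFactor_iff_of_not_isSCIM σ hs').1 (by simpa using hp), hB⟩

theorem sPrimeM_eq (M d : ℕ) : SPrimeM σ M d = Nat.card (conjPairs σ M false false d) := by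
  refine Nat.card_congr (Equiv.subtypeEquivRight fun B => ?_)
  constructor
  · rintro ⟨g, hg, hd, hp, hB⟩
    obtain ⟨hm, hi, h0, hs⟩ := (isNonSelfConj_iff σ).1 hg
    exact ⟨g, hm, hi, h0, by simpa using hs,
      by simpa [isPowerFactor_iff_of_not_isSCIM σ hs] using hp, hd, hB⟩
  · rintro ⟨g, hm, hi, h0, hs, hp, hd, hB⟩
    have hs' : ¬ IsSCIM σ g := by simpa using hs
    exact ⟨g, (isNonSelfConj_iff σ).2 ⟨hm, hi, h0, hs'⟩, hd,
      by simpa [isPowerFactor_iff_of_not_isSCIM σ hs'] using hp, hB⟩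

theorem natCard_scim_eq (M d : ℕ) (e : Bool) (p : F[X] → Prop)
    (hp : ∀ f, p f ↔ IsSCIM σ f ∧ (IsMtildePowerPoly σ M f ↔ e = true) ∧ f.natDegree = d) :
    Nat.card {f // p f} = Nat.card (conjPairs σ M true e d) := by
  refine Nat.card_congr (Equiv.ofBijective (fun f => ⟨s(f.1, tildePoly σ f.1), f.1, ?_⟩) ⟨?_, ?_⟩)
  · obtain ⟨hs, he, hd⟩ := (hp f.1).1 f.2
    exact ⟨hs.1, hs.2.1, hs.2.2.1, by simpa using hs,
      by rw [isPowerFactor_iff_of_isSCIM σ hs, he], hd, rfl⟩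
  · intro f g h
    have h1 := congrArg Subtype.val h
    simp only [((hp f.1).1 f.2).1.2.2.2, ((hp g.1).1 g.2).1.2.2.2] at h1
    exact Subtype.ext (Sym2.diag_injective h1)
  · rintro ⟨B, f, hm, hi, h0, hs, he, hd, rfl⟩
    have hs' : IsSCIM σ f := by simpa using hs
    exact ⟨⟨f, (hp f).2 ⟨hs', by rw [← he, isPowerFactor_iff_of_isSCIM σ hs'], hd⟩⟩, rfl⟩

theorem ntildeM_eq (M d : ℕ) : NtildeM σ M d = Nat.card (conjPairs σ M true true d) := by
  refine natCard_scim_eq σ M d true _ fun f => ?_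
  simp only [iff_true]
  exact ⟨fun h => ⟨h.1.1, h.1, h.2⟩, fun h => ⟨h.2.1, h.2.2⟩⟩

theorem stildePrimeM_eq (M d : ℕ) :
    StildePrimeM σ M d = Nat.card (conjPairs σ M true false d) := by
  refine natCard_scim_eq σ M d false _ fun f => ?_
  simp only [Bool.false_eq_true, iff_false]
  exact ⟨fun h => ⟨h.1, h.2.2, h.2.1⟩, fun h => ⟨h.1, h.2.2, h.2.1⟩⟩

theorem factorCount_one (f : F[X]) : factorCount f 1 = 0 := by
  simpa using factorCount_pow f 1 0

theorem powerCond_one (M : ℕ) : PowerCond σ M 1 :=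
  ⟨monic_one, by simp, tildePoly_one σ, fun f _ _ _ => by rw [factorCount_one]; exact dvd_zero _⟩

theorem PowerCond.mul {M : ℕ} {a b : F[X]} (ha : PowerCond σ M a) (hb : PowerCond σ M b) :
    PowerCond σ M (a * b) := by
  refine ⟨ha.1.mul hb.1, ?_, ?_, fun f hm hf hn => ?_⟩
  · rw [mul_coeff_zero]
    exact mul_ne_zero ha.2.1 hb.2.1
  · rw [tildePoly_mul, ha.2.2.1, hb.2.2.1]
  · rw [factorCount_mul f ha.1.ne_zero hb.1.ne_zero]
    exact dvd_add (ha.2.2.2 f hm hf hn) (hb.2.2.2 f hm hf hn)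

theorem PowerCond.pow {M : ℕ} {a : F[X]} (ha : PowerCond σ M a) (k : ℕ) :
    PowerCond σ M (a ^ k) := by
  induction k with
  | zero => rw [pow_zero]; exact powerCond_one σ M
  | succ k ih => rw [pow_succ]; exact ih.mul σ ha

theorem PowerCond.prod {M : ℕ} {T : Type*} (s : Finset T) {P : T → F[X]}
    (h : ∀ t ∈ s, PowerCond σ M (P t)) : PowerCond σ M (∏ t ∈ s, P t) :=
  Finset.prod_induction _ (PowerCond σ M) (fun _ _ ha hb => ha.mul σ hb) (powerCond_one σ M) h

theorem natDegree_powerAtom {M : ℕ} {f : F[X]} (hm : f.Monic) (h0 : f.coeff 0 ≠ 0) {b e : Bool}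
    (hb : IsSCIM σ f ↔ b = true) (he : IsPowerFactor σ M f ↔ e = true) :
    (powerAtom σ M f).natDegree =
      (if b then f.natDegree else 2 * f.natDegree) * (if e then 1 else M) := by
  have h1 : (selfConjBase σ f).natDegree = if b then f.natDegree else 2 * f.natDegree := by
    rw [selfConjBase]
    cases b with
    | true => rw [if_pos (hb.2 rfl), if_pos rfl]
    | false =>
      rw [if_neg (fun h => Bool.false_ne_true (hb.1 h)), if_neg Bool.false_ne_true,
        hm.natDegree_mul (monic_tildePoly σ h0), natDegree_tildePoly σ h0, two_mul]
  rw [powerAtom]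
  cases e with
  | true => rw [if_pos (he.2 rfl), if_pos rfl, h1, mul_one]
  | false =>
    rw [if_neg (fun h => Bool.false_ne_true (he.1 h)), if_neg Bool.false_ne_true, natDegree_pow,
      h1, mul_comm]

theorem exists_eq_prod_pow_of_multiset {T : Type*} [Fintype T] {P : T → F[X]} (s : Multiset F[X])
    (hs : ∀ Q ∈ s, ∃ t, P t = Q) : ∃ m : T → ℕ, s.prod = ∏ t, P t ^ m t := by
  classical
  induction s using Multiset.induction_on with
  | empty => exact ⟨0, by simp⟩
  | cons Q s ih =>
    obtain ⟨m, hm⟩ := ih fun R hR => hs R (Multiset.mem_cons_of_mem hR)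
    obtain ⟨t, rfl⟩ := hs Q (Multiset.mem_cons_self Q s)
    refine ⟨Pi.single t 1 + m, ?_⟩
    rw [Multiset.prod_cons, hm]
    simp only [Pi.add_apply, pow_add, Finset.prod_mul_distrib]
    congr 1
    rw [Finset.prod_eq_single t]
    · simp
    · intro u _ hu
      simp [Pi.single_eq_of_ne hu]
    · simp

/-- The degree of the polynomials attached to the index `k` in the generating function. -/
def indexDegree (b : Bool) (k : ℕ) : ℕ := if b then 2 * k + 1 else k + 1

/-- The weight of the polynomials attached to the index `k` in the generating function. -/
def indexWeight (M : ℕ) (b e : Bool) (k : ℕ) : ℕ :=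
  (if b then 2 * k + 1 else 2 * (k + 1)) * (if e then 1 else M)

theorem natCard_powerCond_eq [Finite F] (hσ : ∀ x, σ (σ x) = x)
    (hodd : ∀ f, IsSCIM σ f → Odd f.natDegree) {M : ℕ} (hM : 0 < M) (n : ℕ) :
    (Nat.card {c : F[X] // PowerCond σ M c ∧ c.natDegree = n} : ℚ) =
      PowerSeries.coeff n (∏ x : Bool × Bool × Fin (n + 1),
        (1 - PowerSeries.X ^ indexWeight M x.1 x.2.1 x.2.2 : PowerSeries ℚ)⁻¹ ^
          Nat.card (conjPairs σ M x.1 x.2.1 (indexDegree x.1 x.2.2))) := by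
  let C : Bool × Bool × Fin (n + 1) → Type _ := fun x =>
    conjPairs σ M x.1 x.2.1 (indexDegree x.1 x.2.2)
  let _ : ∀ x, Fintype (C x) := fun x => (finite_conjPairs σ M _ _ _).fintype
  let T := Σ x, C x
  choose f hm hi h0 hs hp hd hB using fun t : T => t.2.2
  let P : T → F[X] := fun t => powerAtom σ M (f t)
  have hPa : ∀ t, IsPowerAtom σ M (P t) := fun t => ⟨f t, hm t, hi t, h0 t, rfl⟩
  have hdeg : ∀ t, (P t).natDegree = indexWeight M t.1.1 t.1.2.1 t.1.2.2 := by
    intro t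
    rw [natDegree_powerAtom σ (hm t) (h0 t) (hs t) (hp t), hd t, indexWeight, indexDegree]
    cases t.1.1 <;> simp
  have hinj : Function.Injective P := by
    intro t u htu
    have h1 : f t ∣ P u := htu ▸ dvd_powerAtom σ hM.ne'
    have h2 : f t ∣ selfConjBase σ (f u) := by
      simp only [P, powerAtom] at h1
      split_ifs at h1
      · exact h1
      · exact (hi t).prime.dvd_of_dvd_pow h1
    have h3 := eq_or_eq_tildePoly_of_dvd_selfConjBase σ hσ (hm u) (hi u) (h0 u) (hm t) (hi t) h2
    have key : (IsSCIM σ (f t) ↔ IsSCIM σ (f u)) ∧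
        (IsPowerFactor σ M (f t) ↔ IsPowerFactor σ M (f u)) ∧
        (f t).natDegree = (f u).natDegree ∧
        s(f t, tildePoly σ (f t)) = s(f u, tildePoly σ (f u)) := by
      rcases h3 with h3 | h3
      · rw [h3]; simp
      · have h4 : tildePoly σ (f t) = f u := by
          rw [h3, tildePoly_tildePoly σ hσ (hm u) (h0 u)]
        refine ⟨?_, ⟨fun h => ?_, fun h => ?_⟩, ?_, ?_⟩
        · rw [isSCIM_iff σ (hm t) (hi t) (h0 t), isSCIM_iff σ (hm u) (hi u) (h0 u), h4, ← h3,
            eq_comm]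
        · rw [← h4]; exact h.tildePoly σ hσ hM (h0 t)
        · rw [h3]; exact h.tildePoly σ hσ hM (h0 u)
        · rw [h3, natDegree_tildePoly σ (h0 u)]
        · rw [h4, ← h3]; exact Sym2.eq_swap
    obtain ⟨k1, k2, k3, k4⟩ := key
    rw [hs t, hs u] at k1
    rw [hp t, hp u] at k2
    have e1 : t.1.1 = u.1.1 := Bool.eq_iff_iff.2 k1
    have e2 : t.1.2.1 = u.1.2.1 := Bool.eq_iff_iff.2 k2
    have e3 : t.1.2.2 = u.1.2.2 := by
      rw [hd t, hd u, e1, indexDegree, indexDegree] at k3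
      apply Fin.ext
      split_ifs at k3 <;> omega
    rw [← hB t, ← hB u] at k4
    obtain ⟨⟨tb, te, tk⟩, tB⟩ := t
    obtain ⟨⟨ub, ue, uk⟩, uB⟩ := u
    simp only at e1 e2 e3 k4
    subst e1 e2 e3
    exact congrArg _ (Subtype.ext k4)
  have hcount := natCard_eq_coeff_prod (P := P) (S := PowerCond σ M) (n := n)
    (fun t => ((hPa t).powerCond σ hσ hM).1) (fun t => (hPa t).natDegree_pos σ hσ hM)
    (fun t u htu => (hPa t).isCoprime σ hσ hM (hPa u) fun h => htu (hinj h))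
    (fun m => PowerCond.prod σ _ fun t _ => ((hPa t).powerCond σ hσ hM).pow σ _) ?_
  · rw [hcount]
    congr 1
    simp only [hdeg]
    rw [Fintype.prod_sigma]
    refine Finset.prod_congr rfl fun x _ => ?_
    have hcard : Nat.card (conjPairs σ M x.1 x.2.1 (indexDegree x.1 x.2.2)) =
      (Finset.univ : Finset (C x)).card := Nat.card_eq_fintype_card
    rw [hcard]
    exact Finset.prod_const ((1 - PowerSeries.X ^ indexWeight M x.1 x.2.1 x.2.2 : PowerSeries ℚ)⁻¹)
  · intro c hc hcn
    obtain ⟨s, hsa, rfl⟩ := hc.exists_multiset σ hσ hM _ rfl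
    refine exists_eq_prod_pow_of_multiset s fun Q hQ => ?_
    have hQn : Q.natDegree ≤ n := hcn ▸ natDegree_le_of_dvd (Multiset.dvd_prod hQ) hc.1.ne_zero
    obtain ⟨g, hgm, hgi, hg0, rfl⟩ := hsa Q hQ
    have hgn : g.natDegree ≤ n := (natDegree_le_of_dvd (dvd_powerAtom σ hM.ne')
      (powerCond_powerAtom σ hσ hM hgm hgi hg0).1.ne_zero).trans hQn
    have hgpos := hgi.natDegree_pos
    classical
    obtain ⟨k, hk, hkd⟩ : ∃ k, k < n + 1 ∧
        g.natDegree = indexDegree (decide (IsSCIM σ g)) k := by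
      by_cases hsc : IsSCIM σ g
      · obtain ⟨k, hk⟩ := hodd g hsc
        exact ⟨k, by omega, by simp [indexDegree, hsc, hk]⟩
      · exact ⟨g.natDegree - 1, by omega, by simp [indexDegree, hsc]; omega⟩
    let t : T := ⟨(decide (IsSCIM σ g), decide (IsPowerFactor σ M g), ⟨k, hk⟩),
      ⟨s(g, tildePoly σ g), g, hgm, hgi, hg0, by simp, by simp, hkd, rfl⟩⟩
    refine ⟨t, ?_⟩
    have h1 : s(g, tildePoly σ g) = s(f t, tildePoly σ (f t)) := hB t
    have h2 : f t = g ∨ f t = tildePoly σ g := by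
      rcases Sym2.eq_iff.1 h1 with h | h
      · exact Or.inl h.1.symm
      · exact Or.inr h.2.symm
    rcases h2 with h2 | h2
    · simp only [P, h2]
    · simp only [P, h2]
      exact powerAtom_tildePoly σ hσ hM hgm hgi hg0

end MainCount

/-- Generating function for the conjugacy classes of semisimple `M`-th powers in `U(n,q²)`,
for a prime `M` coprime to `q`. Odd `d` are enumerated as `2k+1` and `d ≥ 1` as `k+1`;
negative exponents are inverses in `ℚ[[z]]`, and all four infinite products converge. -/
theorem statement13 (p ℓ q : ℕ) (hp : p.Prime) (hℓ : 0 < ℓ) (hq : q = p ^ ℓ)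
    (F : Type*) [Field F] [Fintype F] (hF : Fintype.card F = q ^ 2)
    (σ : F →+* F) (hσ : ∀ x : F, σ x = x ^ q)
    (M : ℕ) (hM : M.Prime) (hcop : Nat.gcd M q = 1) :
    (Multipliable fun k : ℕ => (((1 : PowerSeries ℚ) - PowerSeries.X ^ (2 * k + 1)) ^
        NtildeM σ M (2 * k + 1))⁻¹) ∧
    (Multipliable fun k : ℕ => (((1 : PowerSeries ℚ) - PowerSeries.X ^ (2 * (k + 1))) ^
        RtildeM σ M (k + 1))⁻¹) ∧
    (Multipliable fun k : ℕ => (((1 : PowerSeries ℚ) - PowerSeries.X ^ ((2 * k + 1) * M)) ^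
        StildePrimeM σ M (2 * k + 1))⁻¹) ∧
    (Multipliable fun k : ℕ => (((1 : PowerSeries ℚ) - PowerSeries.X ^ (2 * (k + 1) * M)) ^
        SPrimeM σ M (k + 1))⁻¹) ∧
    (PowerSeries.mk fun n => if n = 0 then (1 : ℚ) else (numSSPowerClasses σ M n : ℚ)) =
      (∏' k : ℕ, (((1 : PowerSeries ℚ) - PowerSeries.X ^ (2 * k + 1)) ^
          NtildeM σ M (2 * k + 1))⁻¹) *
      (∏' k : ℕ, (((1 : PowerSeries ℚ) - PowerSeries.X ^ (2 * (k + 1))) ^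
          RtildeM σ M (k + 1))⁻¹) *
      (∏' k : ℕ, (((1 : PowerSeries ℚ) - PowerSeries.X ^ ((2 * k + 1) * M)) ^
          StildePrimeM σ M (2 * k + 1))⁻¹) *
      (∏' k : ℕ, (((1 : PowerSeries ℚ) - PowerSeries.X ^ (2 * (k + 1) * M)) ^
          SPrimeM σ M (k + 1))⁻¹) := by
  have hcF : CharP F p := charP_of_card_eq_sq hp (hq ▸ hF)
  have hMF : (M : F) ≠ 0 := by
    rw [Ne, CharP.cast_eq_zero_iff F p]
    intro hpM
    have h1 : p ∣ Nat.gcd M q := Nat.dvd_gcd hpM (hq ▸ dvd_pow_self p hℓ.ne')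
    rw [hcop] at h1
    exact hp.one_lt.ne' (Nat.dvd_one.1 h1)
  have hq1 : 1 < q := hq ▸ Nat.one_lt_pow hℓ.ne' hp.one_lt
  have hσσ : ∀ x, σ (σ x) = x := by
    intro x
    rw [hσ, hσ, ← pow_mul, ← sq, ← hF, FiniteField.pow_card]
  have hne : ∃ x, σ x ≠ x := by
    by_contra! hc
    have h1 : Fintype.card F ≤ q := by
      have hX : (X ^ q - X : F[X]) ≠ 0 := FiniteField.X_pow_card_sub_X_ne_zero F hq1
      have h2 : (Finset.univ : Finset F).val ≤ (X ^ q - X : F[X]).roots := by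
        rw [Multiset.le_iff_subset Finset.univ.nodup]
        intro x _
        rw [mem_roots hX, IsRoot, eval_sub, eval_pow, eval_X, ← hσ, hc, sub_self]
      have h3 := (Multiset.card_le_card h2).trans (card_roots' _)
      rwa [FiniteField.X_pow_card_sub_X_natDegree_eq F hq1] at h3
    rw [hF] at h1
    nlinarith
  have hodd : ∀ f, IsSCIM σ f → Odd f.natDegree := fun f hf =>
    hf.odd_natDegree σ hp hq hF hσ hσσ
  have hM0 := hM.pos
  have hM2 := hM.two_le
  obtain ⟨m1, t1⟩ := PowerSeries.multipliable_and_tprod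
    (f := fun k : ℕ => (((1 : PowerSeries ℚ) - PowerSeries.X ^ (2 * k + 1)) ^
        NtildeM σ M (2 * k + 1))⁻¹)
    fun k => PowerSeries.X_pow_dvd_inv_one_sub_X_pow_pow_sub_one (by omega) (by omega) _
  obtain ⟨m2, t2⟩ := PowerSeries.multipliable_and_tprod
    (f := fun k : ℕ => (((1 : PowerSeries ℚ) - PowerSeries.X ^ (2 * (k + 1))) ^
        RtildeM σ M (k + 1))⁻¹)
    fun k => PowerSeries.X_pow_dvd_inv_one_sub_X_pow_pow_sub_one (by omega) (by omega) _
  obtain ⟨m3, t3⟩ := PowerSeries.multipliable_and_tprod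
    (f := fun k : ℕ => (((1 : PowerSeries ℚ) - PowerSeries.X ^ ((2 * k + 1) * M)) ^
        StildePrimeM σ M (2 * k + 1))⁻¹)
    fun k => PowerSeries.X_pow_dvd_inv_one_sub_X_pow_pow_sub_one (by positivity)
      (by nlinarith) _
  obtain ⟨m4, t4⟩ := PowerSeries.multipliable_and_tprod
    (f := fun k : ℕ => (((1 : PowerSeries ℚ) - PowerSeries.X ^ (2 * (k + 1) * M)) ^
        SPrimeM σ M (k + 1))⁻¹)
    fun k => PowerSeries.X_pow_dvd_inv_one_sub_X_pow_pow_sub_one (by positivity)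
      (by nlinarith) _
  refine ⟨m1, m2, m3, m4, ?_⟩
  ext n
  have hcoef := PowerSeries.coeff_eq_of_X_pow_dvd_sub
    (PowerSeries.X_pow_dvd_mul_sub_mul (PowerSeries.X_pow_dvd_mul_sub_mul
      (PowerSeries.X_pow_dvd_mul_sub_mul (t1 (n + 1)) (t2 (n + 1))) (t3 (n + 1))) (t4 (n + 1)))
    (Nat.lt_succ_self n)
  rw [hcoef]
  have hcard : (if n = 0 then (1 : ℚ) else (numSSPowerClasses σ M n : ℚ)) =
      Nat.card {c : F[X] // PowerCond σ M c ∧ c.natDegree = n} := by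
    split_ifs with h0
    · subst h0
      have h1 : Nat.card {c : F[X] // PowerCond σ M c ∧ c.natDegree = 0} = 1 := by
        rw [Nat.card_eq_one_iff_exists]
        exact ⟨⟨1, powerCond_one σ M, natDegree_one⟩, fun c =>
          Subtype.ext (c.2.1.1.natDegree_eq_zero.1 c.2.2)⟩
      rw [h1, Nat.cast_one]
    · rw [numSSPowerClasses_eq σ hσσ hne hM hMF n]
  rw [PowerSeries.coeff_mk, hcard, natCard_powerCond_eq σ hσσ hodd hM.pos n]
  congr 1
  simp only [Fintype.prod_prod_type, Fintype.prod_bool, Finset.prod_range, indexWeight,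
    indexDegree, if_true, Bool.false_eq_true, if_false, mul_one, PowerSeries.inv_pow_eq,
    ntildeM_eq, rtildeM_eq, stildePrimeM_eq, sPrimeM_eq]
  ring
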